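/- arXiv:1806.10035 — 5 statements merged into one kernel-verified Lean document; each statement's English description precedes it below -/
import Mathlib

section
/- Let R be a commutative ring and let P be a prime ideal of R such that the maximal ideal P·R_P of the localization R_P is a finitely generated ideal and P is minimal over a principal ideal of R. Let Q be a prime ideal of R with Q strictly contained in P. Then Q has height 0 if and only if Q is minimal over a finitely generated ideal I of R such that for every integer n > 0 the R-module (I^n)_(Q) / (I^{n+1})_(Q) is finitely generated. -/
/-!
Height zero gives the criterion with `I = 0`.

For the converse write `J n` for `(I ^ n)_(Q)` and let `P` be minimal over `(a)`, so `a ∉ Q`.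
In `A = R_P` the only prime over `a` is the finitely generated maximal ideal, hence `A / (a)` is
Artinian (`isArtinianRing_quotient`) and `J n A + (a) = J (n + 1) A + (a)` for some `n > 0`.
Since `a ∉ Q`, each `J n A` is saturated with respect to `a`, so `J n A ⊆ J (n + 1) A + a J n A`.
As `J n / J (n + 1)` is finitely generated, Nakayama's lemma gives `J n A = J (n + 1) A`
(`le_of_saturated`), and then `J n = J (n + 1)`. In `R_Q` this says
`I ^ n R_Q = I ^ (n + 1) R_Q`, so `I R_Q` is nilpotent by Nakayama again. Every prime contained in
`Q` therefore contains `I`, and minimality of `Q` over `I` shows that `Q` has height zero.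
-/

/-- `I_(Q) = {r ∈ R : b·r ∈ I for some b ∈ R \ Q}`, an ideal of `R` when `Q` is prime. -/
def satIdeal {R : Type*} [CommRing R] (I Q : Ideal R) (hQ : Q.IsPrime) : Ideal R where
  carrier := {r : R | ∃ b : R, b ∉ Q ∧ b * r ∈ I}
  zero_mem' := ⟨1, fun h => hQ.ne_top (Q.eq_top_iff_one.mpr h), by simpa using I.zero_mem⟩
  add_mem' := by
    rintro a b ⟨s, hs, hsa⟩ ⟨t, ht, htb⟩
    refine ⟨s * t, fun h => (hQ.mem_or_mem h).elim hs ht, ?_⟩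
    have h : s * t * (a + b) = t * (s * a) + s * (t * b) := by ring
    rw [h]
    exact I.add_mem (I.mul_mem_left _ hsa) (I.mul_mem_left _ htb)
  smul_mem' := by
    rintro c r ⟨s, hs, hsr⟩
    refine ⟨s, hs, ?_⟩
    have h : s * (c • r) = c * (s * r) := by rw [smul_eq_mul]; ring
    rw [h]
    exact I.mul_mem_left _ hsr

/-- All primes of `A / (a)` equal the image of the finitely generated maximal ideal, so the ring is
Noetherian by Cohen's theorem, and zero-dimensional. -/
theorem isArtinianRing_quotient {A : Type*} [CommRing A] [IsLocalRing A]
    (hfg : (IsLocalRing.maximalIdeal A).FG) (a : A)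
    (ha : ∀ q : Ideal A, q.IsPrime → a ∈ q → q = IsLocalRing.maximalIdeal A) :
    IsArtinianRing (A ⧸ Ideal.span {a}) := by
  have hsurj : Function.Surjective (Ideal.Quotient.mk (Ideal.span {a})) :=
    Ideal.Quotient.mk_surjective
  have key : ∀ p : Ideal (A ⧸ Ideal.span {a}), p.IsPrime →
      p.comap (Ideal.Quotient.mk (Ideal.span {a})) = IsLocalRing.maximalIdeal A := by
    intro p hp
    refine ha _ (Ideal.comap_isPrime _ p) ?_
    rw [Ideal.mem_comap, Ideal.Quotient.eq_zero_iff_mem.mpr (Ideal.mem_span_singleton_self a)]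
    exact p.zero_mem
  have hmap : ∀ p : Ideal (A ⧸ Ideal.span {a}), p.IsPrime →
      p = (IsLocalRing.maximalIdeal A).map (Ideal.Quotient.mk (Ideal.span {a})) := by
    intro p hp
    rw [← key p hp, Ideal.map_comap_of_surjective _ hsurj]
  have hN : IsNoetherianRing (A ⧸ Ideal.span {a}) := by
    refine IsNoetherianRing.of_prime fun p hp => ?_
    rw [hmap p hp]
    exact hfg.map _
  have hD : Ring.KrullDimLE 0 (A ⧸ Ideal.span {a}) := by
    refine Ring.KrullDimLE.mk₀ fun p hp => ?_
    obtain ⟨m, hm, hpm⟩ := Ideal.exists_le_maximal p hp.ne_top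
    have : p = m := (hmap p hp).trans (hmap m hm.isPrime).symm
    exact this ▸ hm
  exact isArtinianRing_iff_isNoetherianRing_krullDimLE_zero.mpr ⟨hN, hD⟩

/-- Nakayama step: if `J` is saturated with respect to `a` in the maximal ideal, is contained in
`K` modulo `a`, and is finitely generated modulo `K`, then `J ≤ K`. -/
theorem le_of_saturated {A : Type*} [CommRing A] [IsLocalRing A] {J K N : Ideal A} {a : A}
    (ha : a ∈ IsLocalRing.maximalIdeal A) (hKJ : K ≤ J) (hsat : ∀ z, a * z ∈ J → z ∈ J)
    (hJ : J ≤ K ⊔ Ideal.span {a}) (hN : N.FG) (hJN : J = N ⊔ K) : J ≤ K := by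
  have hNJ : N ≤ J := hJN ▸ le_sup_left
  have h : N ≤ K := by
    refine Submodule.le_of_le_smul_of_le_jacobson_bot (I := Ideal.span {a}) hN ?_ ?_
    · rw [IsLocalRing.jacobson_eq_maximalIdeal ⊥ bot_ne_top, Ideal.span_singleton_le_iff_mem]
      exact ha
    · intro x hx
      obtain ⟨k, hk, w, hw, rfl⟩ := Submodule.mem_sup.mp (hJ (hNJ hx))
      obtain ⟨z, rfl⟩ := Ideal.mem_span_singleton'.mp hw
      have hz : z ∈ J := by
        refine hsat z ?_
        have := J.sub_mem (hNJ hx) (hKJ hk)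
        rwa [add_sub_cancel_left, mul_comm] at this
      rw [hJN] at hz
      obtain ⟨y, hy, k', hk', rfl⟩ := Submodule.mem_sup.mp hz
      have e : k + (y + k') * a = (k + a * k') + a * y := by ring
      rw [e]
      exact Submodule.add_mem_sup (K.add_mem hk (K.mul_mem_left _ hk'))
        (Submodule.smul_mem_smul (Ideal.mem_span_singleton_self a) hy)
  rw [hJN]
  exact sup_le h le_rfl

theorem le_satIdeal {R : Type*} [CommRing R] (I Q : Ideal R) (hQ : Q.IsPrime) :
    I ≤ satIdeal I Q hQ :=
  fun x hx => ⟨1, fun h => hQ.ne_top (Q.eq_top_iff_one.mpr h), by simpa using hx⟩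

theorem satIdeal_mono {R : Type*} [CommRing R] {I J : Ideal R} (h : I ≤ J) (Q : Ideal R)
    (hQ : Q.IsPrime) : satIdeal I Q hQ ≤ satIdeal J Q hQ :=
  fun _ ⟨b, hb, hbx⟩ => ⟨b, hb, h hbx⟩

theorem mem_satIdeal_of_mul_mem {R : Type*} [CommRing R] {I Q : Ideal R} {hQ : Q.IsPrime} {b x : R}
    (hb : b ∉ Q) (h : b * x ∈ satIdeal I Q hQ) : x ∈ satIdeal I Q hQ := by
  obtain ⟨c, hc, hcx⟩ := h
  exact ⟨c * b, fun h => (hQ.mem_or_mem h).elim hc hb, by rwa [mul_assoc]⟩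

theorem exists_notMem_mul_mem_of_mem_map {R : Type*} [CommRing R] (P : Ideal R) [P.IsPrime]
    {J : Ideal R} {x : R}
    (hx : algebraMap R (Localization.AtPrime P) x ∈ J.map (algebraMap R (Localization.AtPrime P))) :
    ∃ u, u ∉ P ∧ u * x ∈ J := by
  obtain ⟨u, hu, hux⟩ :=
    (IsLocalization.algebraMap_mem_map_algebraMap_iff P.primeCompl _ J x).mp hx
  exact ⟨u, hu, hux⟩

theorem exists_fg_sup_eq {R : Type*} [CommRing R] {J K : Ideal R} (hKJ : K ≤ J)
    (h : (Submodule.map K.mkQ J).FG) : ∃ N : Ideal R, N.FG ∧ J = N ⊔ K := by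
  classical
  obtain ⟨s, hs⟩ := h
  have hsub : (s : Set (R ⧸ K)) ⊆ K.mkQ '' (J : Set R) := by
    rw [← Submodule.map_coe, ← hs]
    exact Submodule.subset_span
  obtain ⟨t, -, rfl⟩ := (Finset.subset_set_image_iff).mp hsub
  have hmap : Submodule.map K.mkQ (Submodule.span R (t : Set R)) = Submodule.map K.mkQ J := by
    rw [← hs, Submodule.map_span, Finset.coe_image]
  let N : Ideal R := Submodule.span R (t : Set R)
  have hN : N.FG := ⟨t, rfl⟩
  refine ⟨N, hN, ?_⟩
  have := congrArg (Submodule.comap K.mkQ) hmap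
  rw [Submodule.comap_map_mkQ, Submodule.comap_map_mkQ] at this
  rw [sup_comm, this, sup_eq_right.mpr hKJ]

/-- The powers of `I` stabilise after `Q`-saturation. -/
theorem exists_satIdeal_le {R : Type*} [CommRing R] (P : Ideal R) [hP : P.IsPrime]
    (hPfg : (P.map (algebraMap R (Localization.AtPrime P))).FG)
    {a : R} (ha : P ∈ (Ideal.span {a}).minimalPrimes)
    (Q : Ideal R) (hQ : Q.IsPrime) (hQP : Q < P) (I : Ideal R)
    (hI : ∀ n : ℕ, 0 < n →
      (Submodule.map (satIdeal (I ^ (n + 1)) Q hQ).mkQ (satIdeal (I ^ n) Q hQ)).FG) :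
    ∃ n : ℕ, satIdeal (I ^ n) Q hQ ≤ satIdeal (I ^ (n + 1)) Q hQ := by
  have haQ : a ∉ Q := fun h =>
    hQP.not_ge (ha.2 ⟨hQ, (Ideal.span_singleton_le_iff_mem Q).mpr h⟩ hQP.le)
  have haP : a ∈ P := (Ideal.span_singleton_le_iff_mem P).mp ha.1.2
  let A := Localization.AtPrime P
  let f : R →+* A := algebraMap R A
  have hart : IsArtinianRing (A ⧸ Ideal.span {f a}) := by
    refine isArtinianRing_quotient (by rwa [← Localization.AtPrime.map_eq_maximalIdeal]) _ ?_
    intro q hq haq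
    have hle : q.comap f ≤ P :=
      (Ideal.comap_mono (IsLocalRing.le_maximalIdeal hq.ne_top)).trans
        (Localization.AtPrime.under_maximalIdeal (I := P)).le
    have heq : q.comap f = P := le_antisymm hle
      (ha.2 ⟨Ideal.comap_isPrime f q, (Ideal.span_singleton_le_iff_mem _).mpr haq⟩ hle)
    rw [← Localization.AtPrime.map_eq_maximalIdeal]
    exact (IsLocalization.map_under P.primeCompl A q).symm.trans (congrArg (Ideal.map f) heq)
  have hanti : Antitone fun n => satIdeal (I ^ n) Q hQ :=
    fun m n h => satIdeal_mono (Ideal.pow_le_pow_right h) Q hQ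
  let π := Ideal.Quotient.mk (Ideal.span {f a})
  let c : ℕ →o (Ideal (A ⧸ Ideal.span {f a}))ᵒᵈ :=
    ⟨fun n => OrderDual.toDual (((satIdeal (I ^ n) Q hQ).map f).map π),
      fun m n h => Ideal.map_mono (Ideal.map_mono (hanti h))⟩
  obtain ⟨n, hn⟩ := IsArtinian.monotone_stabilizes c
  have hstab : ((satIdeal (I ^ (n + 1)) Q hQ).map f).map π =
      ((satIdeal (I ^ (n + 1 + 1)) Q hQ).map f).map π :=
    ((hn (n + 1) (by omega)).symm.trans (hn (n + 1 + 1) (by omega)) :)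
  refine ⟨n + 1, ?_⟩
  have hJK : satIdeal (I ^ (n + 1 + 1)) Q hQ ≤ satIdeal (I ^ (n + 1)) Q hQ := hanti (by omega)
  obtain ⟨N, hN, hJN⟩ := exists_fg_sup_eq hJK (hI (n + 1) (by omega))
  have hle : (satIdeal (I ^ (n + 1)) Q hQ).map f ≤ (satIdeal (I ^ (n + 1 + 1)) Q hQ).map f := by
    refine le_of_saturated (a := f a) (N := N.map f) ?_ (Ideal.map_mono hJK) ?_ ?_
      (hN.map f) ?_
    · rw [← Localization.AtPrime.map_eq_maximalIdeal]
      exact Ideal.mem_map_of_mem f haP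
    · intro z hz
      obtain ⟨r, s, rfl⟩ := IsLocalization.exists_mk'_eq P.primeCompl z
      have hr : f (a * r) ∈ (satIdeal (I ^ (n + 1)) Q hQ).map f := by
        have := Ideal.mul_mem_left _ (f s) hz
        rwa [mul_left_comm, IsLocalization.mk'_spec', ← map_mul] at this
      obtain ⟨u, hu, hur⟩ := exists_notMem_mul_mem_of_mem_map P hr
      have := mem_satIdeal_of_mul_mem haQ
        (mem_satIdeal_of_mul_mem (fun h => hu (hQP.le h)) hur)
      exact IsLocalization.mk'_mem_map_algebraMap_iff P.primeCompl A _ r s |>.mpr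
        ⟨1, one_mem _, by simpa using this⟩
    · have := Ideal.comap_mono (f := π) hstab.le
      rw [Ideal.comap_map_of_surjective π Ideal.Quotient.mk_surjective,
        Ideal.comap_map_of_surjective π Ideal.Quotient.mk_surjective,
        ← RingHom.ker_eq_comap_bot, Ideal.mk_ker] at this
      exact le_sup_left.trans this
    · rw [← Ideal.map_sup, ← hJN]
  intro x hx
  obtain ⟨u, hu, hux⟩ := exists_notMem_mul_mem_of_mem_map P (hle (Ideal.mem_map_of_mem f hx))
  exact mem_satIdeal_of_mul_mem (fun h => hu (hQP.le h)) hux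

/-- **Height Zero Criterion.**  Let `P` be a prime ideal of `R` such that `P·R_P` is finitely
generated and `P` is minimal over a principal ideal.  For a prime `Q ⊊ P`, `Q` has height zero
iff `Q` is minimal over a finitely generated ideal `I` such that each
`(I^n)_(Q)/(I^{n+1})_(Q)` is a finitely generated `R`-module. -/
theorem heightZeroCriterion {R : Type*} [CommRing R] (P : Ideal R) [hP : P.IsPrime]
    (hPfg : (P.map (algebraMap R (Localization.AtPrime P))).FG)
    (hmin : ∃ a : R, P ∈ (Ideal.span {a}).minimalPrimes)
    (Q : Ideal R) (hQ : Q.IsPrime) (hQP : Q < P) :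
    Order.height (⟨Q, hQ⟩ : PrimeSpectrum R) = 0 ↔
      ∃ I : Ideal R, I.FG ∧ Q ∈ I.minimalPrimes ∧
        ∀ n : ℕ, 0 < n →
          (Submodule.map (satIdeal (I ^ (n + 1)) Q hQ).mkQ
            (satIdeal (I ^ n) Q hQ)).FG := by
  constructor
  · intro h
    have hQmin : IsMin (⟨Q, hQ⟩ : PrimeSpectrum R) := Order.height_eq_zero.mp h
    refine ⟨⊥, Submodule.fg_bot, ⟨⟨hQ, bot_le⟩, fun q hq hle => ?_⟩, fun n hn => ?_⟩
    · exact hQmin (b := ⟨q, hq.1⟩) hle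
    · have h0 : (⊥ : Ideal R) ^ n = ⊥ ^ (n + 1) := by
        rw [← Ideal.zero_eq_bot, zero_pow hn.ne', zero_pow n.succ_ne_zero]
      rw [h0, Submodule.mkQ_map_self]
      exact Submodule.fg_bot
  · rintro ⟨I, hIfg, hQI, hI⟩
    obtain ⟨a, ha⟩ := hmin
    obtain ⟨n, hn⟩ := exists_satIdeal_le P hPfg ha Q hQ hQP I hI
    let g := algebraMap R (Localization.AtPrime Q)
    have hle : (I ^ n).map g ≤ ⊥ ⊔ I.map g • (I ^ n).map g := by
      rw [bot_sup_eq, smul_eq_mul, ← Ideal.map_mul, ← pow_succ', Ideal.map_le_iff_le_comap]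
      intro x hx
      obtain ⟨b, hb, hbx⟩ := hn (le_satIdeal _ Q hQ hx)
      exact (IsLocalization.algebraMap_mem_map_algebraMap_iff Q.primeCompl _ _ x).mpr ⟨b, hb, hbx⟩
    have hbot : (I ^ n).map g ≤ ⊥ := by
      refine Submodule.le_of_le_smul_of_le_jacobson_bot ((hIfg.pow).map g) ?_ hle
      rw [IsLocalRing.jacobson_eq_maximalIdeal ⊥ bot_ne_top,
        ← Localization.AtPrime.map_eq_maximalIdeal]
      exact Ideal.map_mono hQI.1.2
    refine Order.height_eq_zero.mpr fun q hq => ?_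
    refine hQI.2 ⟨q.isPrime, fun x hx => ?_⟩ hq
    have hx0 : g (x ^ n) = 0 := hbot (Ideal.mem_map_of_mem g (Ideal.pow_mem_pow hx n))
    obtain ⟨⟨b, hb⟩, hbx⟩ := (IsLocalization.map_eq_zero_iff Q.primeCompl _ _).mp hx0
    have hmem : b * x ^ n ∈ q.asIdeal := by
      rw [show b * x ^ n = 0 from hbx]
      exact q.asIdeal.zero_mem
    exact q.isPrime.mem_of_pow_mem n ((q.isPrime.mem_or_mem hmem).resolve_left fun h => hb (hq h))
end

section
/- Let R be a semilocal ring such that Jac R = √(mR) for some nonzerodivisor m ∈ R, let C = ∩_{k>0} m^k R, and let n > 0. Then a zero-dimensional ideal I of R can be generated by n elements if and only if the ideal I/C of R/C can be generated by n elements. -/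
/-!
Only the direction from `R ⧸ C` back to `R` has content. Lift the generators of `I/C` to a finite
set `t` in `R`, so that `I = (t) + C`. Since `R ⧸ I` is zero-dimensional, every prime over `I` is
maximal and hence contains `m ∈ Jac R`; thus `m ^ k ∈ I` for some `k`
(`exists_pow_mem_of_ringKrullDim_le_zero`). Write `m ^ k = a + c` with `a ∈ (t)` and
`c ∈ C ⊆ m ^ (k + 1) R`, say `c = m ^ (k + 1) d`. Then `m ^ k (1 - m d) = a`, and `1 - m d` is a
unit because `m ∈ Jac R`. So `m ^ k ∈ (t)`, whence `C ⊆ m ^ k R ⊆ (t)` and `I = (t)`.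
-/

open scoped nonZeroDivisors

/-- A semilocal ring: a commutative ring with only finitely many maximal ideals. -/
def IsSemilocalRing (R : Type*) [CommRing R] : Prop := {I : Ideal R | I.IsMaximal}.Finite

theorem exists_pow_mem_of_ringKrullDim_le_zero {R : Type*} [CommRing R] {m : R}
    (hm : m ∈ (⊥ : Ideal R).jacobson) {I : Ideal R} (hI : ringKrullDim (R ⧸ I) ≤ 0) :
    ∃ k : ℕ, m ^ k ∈ I := by
  have : Ring.KrullDimLE 0 (R ⧸ I) := by
    rw [Ring.krullDimLE_iff]
    exact_mod_cast hI
  change m ∈ I.radical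
  rw [Ideal.radical_eq_sInf, Ideal.mem_sInf]
  rintro P ⟨hIP, hP⟩
  have hprime : (P.map (Ideal.Quotient.mk I)).IsPrime :=
    Ideal.map_isPrime_of_surjective Ideal.Quotient.mk_surjective (by rwa [Ideal.mk_ker])
  have hmax : (P.map (Ideal.Quotient.mk I)).IsMaximal := hprime.isMaximal'
  have hPmax : P.IsMaximal := by
    have h := Ideal.comap_isMaximal_of_surjective (Ideal.Quotient.mk I)
      Ideal.Quotient.mk_surjective (K := P.map (Ideal.Quotient.mk I))
    rwa [Ideal.comap_map_of_surjective' _ Ideal.Quotient.mk_surjective, Ideal.mk_ker,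
      sup_eq_left.mpr hIP] at h
  exact (sInf_le (⟨bot_le, hPmax⟩ : P ∈ {J : Ideal R | ⊥ ≤ J ∧ J.IsMaximal}) :
    (⊥ : Ideal R).jacobson ≤ P) hm

/-- A Nakayama-type cancellation: modulo multiples of `m ^ (k + 1)` with `m ∈ Jac R`, membership of
`m ^ k` in an ideal can already be tested. -/
theorem pow_mem_of_mem_sup {R : Type*} [CommRing R] {m : R}
    (hm : m ∈ (⊥ : Ideal R).jacobson) {J C : Ideal R} {k : ℕ}
    (hC : C ≤ Ideal.span {m} ^ (k + 1)) (h : m ^ k ∈ J ⊔ C) : m ^ k ∈ J := by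
  obtain ⟨a, ha, c, hc, hac⟩ := Submodule.mem_sup.mp h
  have hc' := hC hc
  rw [Ideal.span_singleton_pow, Ideal.mem_span_singleton] at hc'
  obtain ⟨d, rfl⟩ := hc'
  have hu : IsUnit (m * (-d) + 1) := Ideal.mem_jacobson_bot.mp hm (-d)
  refine (J.mul_unit_mem_iff_mem hu).mp ?_
  have : m ^ k * (m * (-d) + 1) = a := by linear_combination -hac
  rwa [this]

/-- Let `R` be a semilocal ring with `Jac R = √(mR)` for a nonzerodivisor `m`, and let
`C = ∩_{k>0} m^k R`.  A zero-dimensional ideal `I` (containing `C`) can be generated by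
`n` elements iff `I/C` can be generated by `n` elements. -/
theorem n_generator {R : Type*} [CommRing R] (hsl : IsSemilocalRing R)
    (m : R) (hm : m ∈ R⁰)
    (hJac : (⊥ : Ideal R).jacobson = (Ideal.span {m}).radical)
    (C : Ideal R) (hC : C = ⨅ k : ℕ, Ideal.span {m} ^ (k + 1))
    (n : ℕ) (hn : 0 < n)
    (I : Ideal R) (hCI : C ≤ I) (hI0 : ringKrullDim (R ⧸ I) ≤ 0) :
    (∃ s : Finset R, s.card ≤ n ∧ Ideal.span (s : Set R) = I) ↔
      (∃ s : Finset (R ⧸ C), s.card ≤ n ∧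
        Ideal.span (s : Set (R ⧸ C)) = I.map (Ideal.Quotient.mk C)) := by
  classical
  have hmJ : m ∈ (⊥ : Ideal R).jacobson :=
    hJac ▸ Ideal.le_radical (Ideal.mem_span_singleton_self m)
  have hCk (k : ℕ) : C ≤ Ideal.span {m} ^ (k + 1) := hC.trans_le (iInf_le _ k)
  constructor
  · rintro ⟨s, hs, rfl⟩
    exact ⟨s.image (Ideal.Quotient.mk C), Finset.card_image_le.trans hs, by
      rw [Finset.coe_image, Ideal.map_span]⟩
  · rintro ⟨s, hs, hsI⟩
    obtain ⟨lift, hlift⟩ := (Ideal.Quotient.mk_surjective (I := C)).hasRightInverse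
    refine ⟨s.image lift, Finset.card_image_le.trans hs, ?_⟩
    set J : Ideal R := Ideal.span ((s.image lift : Finset R) : Set R) with hJ
    have hmap : J.map (Ideal.Quotient.mk C) = I.map (Ideal.Quotient.mk C) := by
      rw [hJ, Ideal.map_span, Finset.coe_image, ← Set.image_comp, hlift.comp_eq_id,
        Set.image_id, hsI]
    have hJC : J ⊔ C = I := by
      have h := congrArg (Ideal.comap (Ideal.Quotient.mk C)) hmap
      rwa [Ideal.comap_map_of_surjective' _ Ideal.Quotient.mk_surjective,
        Ideal.comap_map_of_surjective' _ Ideal.Quotient.mk_surjective, Ideal.mk_ker,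
        sup_eq_left.mpr hCI] at h
    obtain ⟨k, hk⟩ := exists_pow_mem_of_ringKrullDim_le_zero hmJ hI0
    have hkJ : m ^ k ∈ J := pow_mem_of_mem_sup hmJ (hCk k) (hJC ▸ hk)
    have hCJ : C ≤ J := calc
      C ≤ Ideal.span {m} ^ (k + 1) := hCk k
      _ ≤ Ideal.span {m} ^ k := Ideal.pow_le_pow_right k.le_succ
      _ ≤ J := by
        rw [Ideal.span_singleton_pow]
        exact (Ideal.span_singleton_le_iff_mem J).mpr hkJ
    rw [← hJC, sup_eq_left.mpr hCJ]
end

section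
/- Let R be a semilocal ring that is Prüfer in dimension zero, and suppose Jac R is a regular ideal and is the radical of a finitely generated ideal A. Then each maximal ideal M of R contains a unique largest nonmaximal prime ideal, i.e., there is a nonmaximal prime ideal P ⊆ M such that every prime ideal of R properly contained in M is contained in P. -/
/-!
The idea is to work locally at `M` but without passing to `R_M`: "`x` divides `y` at `M`" means
`x ∣ s * y` for some `s ∉ M`.

Every finitely generated ideal containing a power of `A` is regular and zero-dimensional
(`isQInvertible_of_pow_le`), hence invertible, and an invertible ideal is generated at `M` by one
member of any given generating set (`exists_local_generator`). Applied to `A`, this gives `a ∈ A`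
generating `A` at `M`. The required prime is the preimage of `⋂ₙ aⁿ R_M`, that is
`P = {x | ∀ n, aⁿ divides x at M}`. Indeed, applying the same fact to `(x) + Aⁿ` shows that every
`x ∉ P` divides some `aⁿ` at `M`. As `a` is a nonunit and a nonzerodivisor in `R_M`, `aᴺ⁺¹` never
divides `aᴺ` at `M`. Hence `P` is prime and `a ∈ M \ P`, while a prime `Q < M` does not contain `a`,
so it contains no divisor at `M` of a power of `a`, which means `Q ≤ P`.
-/

open scoped nonZeroDivisors

/-- An ideal `I` of `R` is invertible if `I · (R :_{Q(R)} I) = R`, where `Q(R)` is the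
total quotient ring of `R` (the localization at the nonzerodivisors). -/
def Ideal.IsQInvertible {R : Type*} [CommRing R] (I : Ideal R) : Prop :=
  IsLocalization.coeSubmodule (Localization R⁰) I *
    (1 / IsLocalization.coeSubmodule (Localization R⁰) I) = 1

/-- A ring `R` is Prüfer in dimension zero if every finitely generated regular
zero-dimensional ideal of `R` is invertible. -/
def PruferInDimZero (R : Type*) [CommRing R] : Prop :=
  ∀ I : Ideal R, I.FG → (∃ r ∈ I, r ∈ R⁰) → ringKrullDim (R ⧸ I) ≤ 0 → I.IsQInvertible

/-- An invertible ideal is generated, locally at a maximal ideal `M`, by a single member of any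
given generating set. -/
lemma exists_local_generator {R : Type*} [CommRing R] {M : Ideal R} (hM : M.IsMaximal)
    (S : Set R) (hI : (Ideal.span S).IsQInvertible) :
    ∃ g ∈ S, ∃ s ∉ M, ∀ x ∈ Ideal.span S, g ∣ s * x := by
  have hinj : Function.Injective (algebraMap R (Localization R⁰)) :=
    IsLocalization.injective _ le_rfl
  by_contra! hcon
  -- Otherwise `g * c ∈ M` for every generator `g` and every `c` in the inverse of the ideal,
  -- since `(g * c) * x = g * (c * x)` is a multiple of `g` for every `x` in the ideal.
  have key : ∀ g ∈ S, ∀ c ∈ 1 / IsLocalization.coeSubmodule (Localization R⁰) (Ideal.span S),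
      algebraMap R _ g * c ∈ IsLocalization.coeSubmodule (Localization R⁰) M := by
    intro g hg c hc
    rw [Submodule.mem_div_iff_forall_mul_mem] at hc
    have hcx : ∀ x ∈ Ideal.span S, ∃ u : R, algebraMap R (Localization R⁰) u =
        c * algebraMap R _ x := fun x hx => by
      have := hc _ ((IsLocalization.mem_coeSubmodule _ _).2 ⟨x, hx, rfl⟩)
      rwa [Submodule.mem_one] at this
    obtain ⟨s, hs⟩ := hcx g (Ideal.subset_span hg)
    refine (IsLocalization.mem_coeSubmodule _ _).2 ⟨s, ?_, by rw [hs, mul_comm]⟩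
    by_contra hsM
    obtain ⟨x, hx, hgx⟩ := hcon g hg s hsM
    obtain ⟨u, hu⟩ := hcx x hx
    refine hgx ⟨u, hinj ?_⟩
    rw [map_mul, map_mul, hs, hu]
    ring
  have hle : IsLocalization.coeSubmodule (Localization R⁰) (Ideal.span S) *
      (1 / IsLocalization.coeSubmodule (Localization R⁰) (Ideal.span S)) ≤
      IsLocalization.coeSubmodule (Localization R⁰) M := by
    rw [Submodule.mul_le]
    intro m hm c hc
    obtain ⟨x, hx, rfl⟩ := (IsLocalization.mem_coeSubmodule _ _).1 hm
    induction hx using Submodule.span_induction with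
    | mem x h => exact key x h c hc
    | zero => simp
    | add x y hx hy ihx ihy =>
      rw [map_add, add_mul]
      exact add_mem (ihx ((IsLocalization.mem_coeSubmodule _ _).2 ⟨x, hx, rfl⟩))
        (ihy ((IsLocalization.mem_coeSubmodule _ _).2 ⟨y, hy, rfl⟩))
    | smul r x hx ihx =>
      rw [smul_eq_mul, map_mul, mul_assoc, ← Algebra.smul_def]
      exact Submodule.smul_mem _ _ (ihx ((IsLocalization.mem_coeSubmodule _ _).2 ⟨x, hx, rfl⟩))
  rw [hI] at hle
  obtain ⟨m, hm, h1⟩ := (IsLocalization.mem_coeSubmodule _ _).1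
    (hle (Submodule.one_le.1 le_rfl))
  rw [← map_one (algebraMap R (Localization R⁰))] at h1
  exact hM.ne_top ((Ideal.eq_top_iff_one M).2 (hinj h1 ▸ hm))

/-- In a semilocal ring the Jacobson radical is a finite intersection of maximal ideals, so a prime
containing it contains, hence equals, one of them. -/
lemma isMaximal_of_jacobson_le {R : Type*} [CommRing R] (hsl : IsSemilocalRing R)
    {q : Ideal R} (hq : q.IsPrime) (h : (⊥ : Ideal R).jacobson ≤ q) : q.IsMaximal := by
  have hfin : Set.Finite {I : Ideal R | I.IsMaximal} := hsl
  have h' : hfin.toFinset.inf id ≤ q := by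
    refine le_trans (le_sInf fun N hN => ?_) h
    exact Finset.inf_le (f := id) (hfin.mem_toFinset.2 hN.2)
  obtain ⟨N, hN, hNq⟩ := (hq.inf_le').1 h'
  have hN' : N.IsMaximal := hfin.mem_toFinset.1 hN
  exact hN'.eq_of_le hq.ne_top hNq ▸ hN'

lemma isQInvertible_of_pow_le {R : Type*} [CommRing R]
    (hsl : IsSemilocalRing R) (hpruf : PruferInDimZero R)
    (hreg : ∃ r ∈ (⊥ : Ideal R).jacobson, r ∈ R⁰)
    (A : Ideal R) (hrad : (⊥ : Ideal R).jacobson = A.radical)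
    (I : Ideal R) (hI : I.FG) (n : ℕ) (hn : A ^ n ≤ I) : I.IsQInvertible := by
  refine hpruf I hI ?_ ?_
  · obtain ⟨r, hr, hr0⟩ := hreg
    rw [hrad] at hr
    obtain ⟨k, hk⟩ := hr
    exact ⟨(r ^ k) ^ n, hn (Ideal.pow_mem_pow hk n), pow_mem (pow_mem hr0 k) n⟩
  · have : Ring.KrullDimLE 0 (R ⧸ I) := by
      refine Ring.KrullDimLE.mk₀ fun p hp => ?_
      have hle : I ≤ p.comap (Ideal.Quotient.mk I) := by
        intro x hx
        simp [Ideal.mem_comap, Ideal.Quotient.eq_zero_iff_mem.2 hx]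
      have hcp : (p.comap (Ideal.Quotient.mk I)).IsPrime := Ideal.comap_isPrime _ _
      have hmax := isMaximal_of_jacobson_le hsl hcp
        (hrad ▸ hcp.radical_le_iff.2 (hcp.le_of_pow_le (hn.trans hle)))
      have := Ideal.map_eq_top_or_isMaximal_of_surjective (Ideal.Quotient.mk I)
        Ideal.Quotient.mk_surjective hmax
      rw [Ideal.map_comap_of_surjective _ Ideal.Quotient.mk_surjective] at this
      exact this.resolve_left hp.ne_top
    exact Order.krullDimLE_iff 0 _ |>.1 this

/-- The preimage in `R` of the ideal `⋂ₙ aⁿ R_M` of the localization `R_M`. -/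
def localPowInf {R : Type*} [CommRing R] (M : Ideal R) [hM : M.IsPrime] (a : R) : Ideal R where
  carrier := {x | ∀ n : ℕ, ∃ s ∉ M, a ^ n ∣ s * x}
  zero_mem' := fun n => ⟨1, hM.one_notMem, by simp⟩
  add_mem' := by
    intro x y hx hy n
    obtain ⟨s, hs, hsx⟩ := hx n
    obtain ⟨t, ht, hty⟩ := hy n
    refine ⟨s * t, hM.mul_notMem hs ht, ?_⟩
    have := dvd_add (hsx.mul_left t) (hty.mul_left s)
    convert this using 1
    ring
  smul_mem' := by
    intro c x hx n
    obtain ⟨s, hs, hsx⟩ := hx n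
    refine ⟨s, hs, ?_⟩
    rw [smul_eq_mul, mul_left_comm]
    exact hsx.mul_left c

/-- Let `R` be a semilocal ring that is Prüfer in dimension zero, whose Jacobson radical is
regular and the radical of a finitely generated ideal `A`.  Then each maximal ideal `M` of `R`
contains a unique largest nonmaximal prime ideal. -/
theorem unique_largest_nonmaximal_prime {R : Type*} [CommRing R]
    (hsl : IsSemilocalRing R) (hpruf : PruferInDimZero R)
    (hreg : ∃ r ∈ (⊥ : Ideal R).jacobson, r ∈ R⁰)
    (A : Ideal R) (hA : A.FG) (hrad : (⊥ : Ideal R).jacobson = A.radical)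
    (M : Ideal R) (hM : M.IsMaximal) :
    ∃ P : Ideal R, P.IsPrime ∧ ¬ P.IsMaximal ∧ P ≤ M ∧
      ∀ Q : Ideal R, Q.IsPrime → Q < M → Q ≤ P := by
  have hMp : M.IsPrime := hM.isPrime
  have hinv := isQInvertible_of_pow_le hsl hpruf hreg A hrad
  obtain ⟨a, haA, s₀, hs₀, hdiv⟩ := exists_local_generator hM (A : Set R)
    (by rw [Ideal.span_eq]; exact hinv A hA 1 (by simp))
  rw [Ideal.span_eq] at hdiv
  have haM : a ∈ M := by
    have hle : (⊥ : Ideal R).jacobson ≤ M := sInf_le ⟨bot_le, hM⟩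
    exact hle (hrad ▸ Ideal.le_radical haA)
  have hpow : ∀ n : ℕ, ∀ x ∈ A ^ n, a ^ n ∣ s₀ ^ n * x := by
    intro n x hx
    have h1 : Ideal.span {s₀} * A ≤ Ideal.span {a} := by
      rw [Ideal.span_singleton_mul_le_iff]
      exact fun z hz => Ideal.mem_span_singleton.2 (hdiv z hz)
    have h2 := Ideal.pow_right_mono h1 n
    rw [mul_pow, Ideal.span_singleton_pow, Ideal.span_singleton_pow,
      Ideal.span_singleton_mul_le_iff] at h2
    exact Ideal.mem_span_singleton.1 (h2 x hx)
  have hs₀n : ∀ n : ℕ, s₀ ^ n ∉ M := fun n h => hs₀ (hMp.mem_of_pow_mem n h)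
  -- `a` is regular at `M`, because at `M` it divides a nonzerodivisor of `R` lying in `A`.
  have hcancel : ∀ (N : ℕ) (s : R), s ∉ M → ¬ a ^ (N + 1) ∣ s * a ^ N := by
    rintro N s hs ⟨t, ht⟩
    obtain ⟨r, hr, hr0⟩ := hreg
    rw [hrad] at hr
    obtain ⟨k, hk⟩ := hr
    obtain ⟨u, hu⟩ := hpow N _ (Ideal.pow_mem_pow hk N)
    have hz : (s - a * t) * s₀ ^ N * (r ^ k) ^ N = 0 := by
      linear_combination (s - a * t) * hu + u * ht
    have hz' : (s - a * t) * s₀ ^ N = 0 :=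
      (mul_right_mem_nonZeroDivisors_eq_zero_iff (pow_mem (pow_mem hr0 k) N)).1 hz
    have hmem : (s - a * t) * s₀ ^ N ∈ M := hz' ▸ M.zero_mem
    rcases hMp.mem_or_mem hmem with h | h
    · exact hs ((M.sub_mem_iff_left (M.mul_mem_right t haM)).1 h)
    · exact hs₀n N h
  have hout : ∀ x ∉ localPowInf M a, ∃ n : ℕ, ∃ s ∉ M, x ∣ s * a ^ n := by
    intro x hx
    have hx' : ¬ ∀ n : ℕ, ∃ s ∉ M, a ^ n ∣ s * x := hx
    push Not at hx'
    obtain ⟨n, hn⟩ := hx'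
    have hspan : Ideal.span ({x} ∪ (A ^ n : Ideal R) : Set R) = Ideal.span {x} ⊔ A ^ n := by
      rw [Ideal.span_union, Ideal.span_eq]
    have hI : (Ideal.span ({x} ∪ (A ^ n : Ideal R) : Set R)).IsQInvertible := by
      rw [hspan]
      exact hinv _ ((Submodule.fg_span_singleton x).sup (hA.pow)) n le_sup_right
    obtain ⟨g, hg, s, hs, hgs⟩ := exists_local_generator hM _ hI
    rcases hg with hg | hg
    · obtain rfl : g = x := hg
      exact ⟨n, s, hs, hgs _ (Ideal.subset_span (Or.inr (Ideal.pow_mem_pow haA n)))⟩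
    · exfalso
      refine hn (s₀ ^ n * s) (hMp.mul_notMem (hs₀n n) hs) ?_
      rw [mul_assoc]
      exact (hpow n g hg).trans
        (mul_dvd_mul_left _ (hgs x (Ideal.subset_span (Or.inl rfl))))
  have hPM : localPowInf M a ≤ M := by
    intro x hx
    obtain ⟨s, hs, h⟩ := hx 1
    rw [pow_one] at h
    exact (hMp.mem_or_mem (M.mem_of_dvd h haM)).resolve_left hs
  have haP : a ∉ localPowInf M a := by
    intro h
    obtain ⟨s, hs, h⟩ := h 2
    exact hcancel 1 s hs (by simpa using h)
  refine ⟨localPowInf M a, ⟨fun h => hM.ne_top (top_le_iff.1 (h ▸ hPM)), ?_⟩, ?_, hPM, ?_⟩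
  · intro x y hxy
    by_contra! hcon
    obtain ⟨n, s, hs, hxs⟩ := hout x hcon.1
    obtain ⟨m, t, ht, hyt⟩ := hout y hcon.2
    obtain ⟨w, hw, hwd⟩ := hxy (n + m + 1)
    refine hcancel (n + m) (w * (s * t)) (hMp.mul_notMem hw (hMp.mul_notMem hs ht)) ?_
    refine hwd.trans ?_
    have := mul_dvd_mul_left w (mul_dvd_mul hxs hyt)
    convert this using 1
    ring
  · intro hmax
    exact haP ((hmax.eq_of_le hM.ne_top hPM).symm ▸ haM)
  · intro Q hQ hQM x hxQ
    by_contra hx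
    obtain ⟨n, s, hs, hxs⟩ := hout x hx
    have haQ : a ∈ Q := hQ.mem_of_pow_mem n
      ((hQ.mem_or_mem (Q.mem_of_dvd hxs hxQ)).resolve_left fun h => hs (hQM.le h))
    have hAQ : A ≤ Q := fun z hz =>
      (hQ.mem_or_mem (Q.mem_of_dvd (hdiv z hz) haQ)).resolve_left fun h => hs₀ (hQM.le h)
    have hQmax := isMaximal_of_jacobson_le hsl hQ (hrad ▸ hQ.radical_le_iff.2 hAQ)
    exact hQM.ne (hQmax.eq_of_le hM.ne_top hQM.le)
end

section
/- Let R be a local ring whose maximal ideal M is the radical of a regular principal ideal I. Then R is Prüfer in dimension zero if and only if R* = R/(∩_{k>0} I^k) is a valuation domain of Krull dimension one. -/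
/-!
Write `I = (a)` with `a` regular, and `N = ⋂ (a ^ k)`.  In a local ring an invertible ideal is
principal, generated by one member of any given generating pair (`dvd_or_dvd_of_isQInvertible`).
An ideal containing a power of `a` is zero-dimensional and regular, so if `R` is Prüfer in
dimension zero then any two elements, one of which divides a power of `a`, are comparable for
divisibility.  In particular each element is in `N` or divides a power of `a`
(`mem_iInf_or_dvd_pow`).  Elements outside `N` thus have products outside `N`, are pairwise
comparable, and have nonzero images in `R ⧸ N` whose radicals contain the maximal ideal; this
gives that `R ⧸ N` is a valuation domain of dimension one.

Conversely, a zero-dimensional ideal `J` contains some `a ^ n`.  If `J` is finitely generated, its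
image in the valuation ring `R ⧸ N` is generated by the image of some `b ∈ J`, so `J ⊆ (b) + N`.
As `a ^ n ≡ b * c` modulo `N ⊆ (a ^ (n + 1))`, the element `a ^ n * (1 - a * d)` is a multiple of
`b` for some `d`; the factor `1 - a * d` is a unit, so `b ∣ a ^ n`.  Hence `b` is regular,
`N ⊆ (b)`, and `J = (b)` is invertible.
-/

open scoped nonZeroDivisors

/-- In a local ring, if `1 = x * p + y * q` with `p`, `q` in the inverse of `(x, y)`, then `x * p`
or `y * q` is a unit of `R`, and the corresponding generator divides the other. -/
lemma dvd_or_dvd_of_isQInvertible {R : Type*} [CommRing R] [IsLocalRing R] {x y : R}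
    (h : (Ideal.span {x, y}).IsQInvertible) : x ∣ y ∨ y ∣ x := by
  have hinj : Function.Injective (algebraMap R (Localization R⁰)) :=
    IsLocalization.injective _ le_rfl
  have h1 : (1 : Localization R⁰) ∈
      IsLocalization.coeSubmodule (Localization R⁰) (Ideal.span {x, y}) *
        (1 / IsLocalization.coeSubmodule (Localization R⁰) (Ideal.span {x, y})) := by
    rw [show _ * _ = _ from h]
    exact Submodule.one_le.mp le_rfl
  rw [IsLocalization.coeSubmodule_span, Set.image_pair, Submodule.span_insert, Submodule.sup_mul,
    Submodule.mem_sup] at h1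
  obtain ⟨u, hu, v, hv, huv⟩ := h1
  obtain ⟨p, hp, rfl⟩ := Submodule.mem_span_singleton_mul.mp hu
  obtain ⟨q, hq, rfl⟩ := Submodule.mem_span_singleton_mul.mp hv
  rw [← Submodule.span_insert] at hp hq
  rw [Submodule.mem_div_iff_forall_mul_mem] at hp hq
  obtain ⟨px, hpx⟩ := Submodule.mem_one.mp
    (hp (algebraMap R _ x) (Submodule.subset_span (by simp)))
  obtain ⟨py, hpy⟩ := Submodule.mem_one.mp
    (hp (algebraMap R _ y) (Submodule.subset_span (by simp)))
  obtain ⟨qx, hqx⟩ := Submodule.mem_one.mp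
    (hq (algebraMap R _ x) (Submodule.subset_span (by simp)))
  obtain ⟨qy, hqy⟩ := Submodule.mem_one.mp
    (hq (algebraMap R _ y) (Submodule.subset_span (by simp)))
  have hsum : px + qy = 1 := by
    apply hinj
    rw [map_add, hpx, hqy, map_one, ← huv]
    ring
  have e1 : y * px = x * py := by
    apply hinj
    rw [map_mul, map_mul, hpx, hpy]
    ring
  have e2 : x * qy = y * qx := by
    apply hinj
    rw [map_mul, map_mul, hqx, hqy]
    ring
  rcases IsLocalRing.isUnit_or_isUnit_of_add_one hsum with hu | hu
  · exact Or.inl (hu.dvd_mul_right.mp ⟨py, e1⟩)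
  · exact Or.inr (hu.dvd_mul_right.mp ⟨qx, e2⟩)

lemma isQInvertible_span_singleton {R : Type*} [CommRing R] {b : R} (hb : b ∈ R⁰) :
    (Ideal.span {b}).IsQInvertible := by
  refine le_antisymm Submodule.mul_one_div_le_one (Submodule.one_le.mpr ?_)
  rw [IsLocalization.coeSubmodule_span_singleton]
  have hinv : IsLocalization.mk' (Localization R⁰) 1 ⟨b, hb⟩ * algebraMap R _ b = 1 := by
    simp
  refine Submodule.mem_span_singleton_mul.mpr
    ⟨IsLocalization.mk' (Localization R⁰) 1 ⟨b, hb⟩, ?_, ?_⟩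
  · rw [Submodule.mem_div_iff_forall_mul_mem]
    intro z hz
    obtain ⟨c, rfl⟩ := Submodule.mem_span_singleton.mp hz
    rw [mul_smul_comm, hinv]
    exact Submodule.smul_mem _ _ (Submodule.one_le.mp le_rfl)
  · rw [mul_comm, hinv]

lemma mem_iInf_span_pow {R : Type*} [CommRing R] {a x : R} :
    x ∈ (⨅ k : ℕ, Ideal.span {a} ^ (k + 1)) ↔ ∀ k, a ^ (k + 1) ∣ x := by
  simp [Ideal.span_singleton_pow, Ideal.mem_span_singleton]

section

variable {R : Type*} [CommRing R] [IsLocalRing R] {a : R}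

lemma ringKrullDim_quotient_le_zero_of_pow_mem
    (hM : IsLocalRing.maximalIdeal R = (Ideal.span {a}).radical) {J : Ideal R} {n : ℕ}
    (hJ : a ^ n ∈ J) : ringKrullDim (R ⧸ J) ≤ 0 := by
  refine Ring.krullDimLE_iff.mp
    (Ideal.krullDimLE_zero_quotient_iff_forall_minimalPrimes_isMaximal.mpr fun P hP ↦ ?_)
  have hPp : P.IsPrime := hP.1.1
  have haP : a ∈ P := hPp.mem_of_pow_mem n (hP.1.2 hJ)
  have hle : IsLocalRing.maximalIdeal R ≤ P := by
    rw [hM, hPp.radical_le_iff, Ideal.span_singleton_le_iff_mem]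
    exact haP
  have := (IsLocalRing.maximalIdeal.isMaximal R).eq_of_le hPp.ne_top hle
  exact this ▸ IsLocalRing.maximalIdeal.isMaximal R

lemma exists_pow_mem_of_ringKrullDim_quotient_le_zero (ha : a ∈ IsLocalRing.maximalIdeal R)
    {J : Ideal R} (hJ : ringKrullDim (R ⧸ J) ≤ 0) : ∃ n, a ^ n ∈ J := by
  have h := Ideal.krullDimLE_zero_quotient_iff_forall_minimalPrimes_isMaximal.mp
    (Ring.krullDimLE_iff.mpr hJ)
  change a ∈ J.radical
  rw [← Ideal.sInf_minimalPrimes, Ideal.mem_sInf]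
  intro P hP
  rwa [IsLocalRing.eq_maximalIdeal (h P hP)]

lemma pow_notMem_iInf_span_pow (ha : a ∈ R⁰) (ha' : a ∈ IsLocalRing.maximalIdeal R) (n : ℕ) :
    a ^ n ∉ (⨅ k : ℕ, Ideal.span {a} ^ (k + 1)) := by
  intro h
  obtain ⟨c, hc⟩ := mem_iInf_span_pow.mp h n
  have : a * c = 1 := by
    refine (mem_nonZeroDivisors_iff.mp (pow_mem ha n)).1 (a * c - 1) ?_ |> sub_eq_zero.mp
    linear_combination -hc
  exact ha' (IsUnit.of_mul_eq_one _ this)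

lemma PruferInDimZero.dvd_or_dvd (hR : PruferInDimZero R)
    (hM : IsLocalRing.maximalIdeal R = (Ideal.span {a}).radical) (ha : a ∈ R⁰) {x y : R} {n : ℕ}
    (hx : x ∣ a ^ n) : x ∣ y ∨ y ∣ x := by
  have hmem : a ^ n ∈ Ideal.span {x, y} :=
    Ideal.mem_of_dvd _ hx (Ideal.subset_span (by simp))
  exact dvd_or_dvd_of_isQInvertible
    (hR _ (Submodule.fg_span (Set.toFinite _)) ⟨_, hmem, pow_mem ha n⟩
      (ringKrullDim_quotient_le_zero_of_pow_mem hM hmem))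

lemma PruferInDimZero.mem_iInf_or_dvd_pow (hR : PruferInDimZero R)
    (hM : IsLocalRing.maximalIdeal R = (Ideal.span {a}).radical) (ha : a ∈ R⁰) (x : R) :
    x ∈ (⨅ k : ℕ, Ideal.span {a} ^ (k + 1)) ∨ ∃ n, x ∣ a ^ n := by
  rw [mem_iInf_span_pow, or_iff_not_imp_left]
  intro h
  push Not at h
  obtain ⟨k, hk⟩ := h
  exact ⟨k + 1, (hR.dvd_or_dvd hM ha dvd_rfl).resolve_left hk⟩

lemma PruferInDimZero.isDomain_quotient (hR : PruferInDimZero R)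
    (hM : IsLocalRing.maximalIdeal R = (Ideal.span {a}).radical) (ha : a ∈ R⁰)
    (ha' : a ∈ IsLocalRing.maximalIdeal R) :
    IsDomain (R ⧸ ⨅ k : ℕ, Ideal.span {a} ^ (k + 1)) := by
  rw [Ideal.Quotient.isDomain_iff_prime, Ideal.isPrime_iff]
  refine ⟨fun h ↦ pow_notMem_iInf_span_pow ha ha' 0 (h ▸ Submodule.mem_top), fun {x y} hxy ↦ ?_⟩
  by_contra! h
  obtain ⟨m, hm⟩ := (hR.mem_iInf_or_dvd_pow hM ha x).resolve_left h.1
  obtain ⟨n, hn⟩ := (hR.mem_iInf_or_dvd_pow hM ha y).resolve_left h.2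
  exact pow_notMem_iInf_span_pow ha ha' (m + n)
    (Ideal.mem_of_dvd _ (pow_add a m n ▸ mul_dvd_mul hm hn) hxy)

lemma PruferInDimZero.ideal_total_quotient (hR : PruferInDimZero R)
    (hM : IsLocalRing.maximalIdeal R = (Ideal.span {a}).radical) (ha : a ∈ R⁰)
    (J J' : Ideal (R ⧸ ⨅ k : ℕ, Ideal.span {a} ^ (k + 1))) : J ≤ J' ∨ J' ≤ J := by
  have hdvd : Std.Total
      (fun x y : R ⧸ ⨅ k : ℕ, Ideal.span {a} ^ (k + 1) ↦ x ∣ y) := by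
    refine ⟨fun x y ↦ ?_⟩
    obtain ⟨x, rfl⟩ := Ideal.Quotient.mk_surjective x
    obtain ⟨y, rfl⟩ := Ideal.Quotient.mk_surjective y
    rcases hR.mem_iInf_or_dvd_pow hM ha x with hx | ⟨n, hn⟩
    · exact Or.inr (by simp [Ideal.Quotient.eq_zero_iff_mem.mpr hx])
    · exact (hR.dvd_or_dvd hM ha hn).imp (map_dvd _) (map_dvd _)
  exact (PreValuationRing.iff_ideal_total.mp (PreValuationRing.iff_dvd_total.mpr hdvd)).total J J'

lemma PruferInDimZero.ringKrullDim_quotient (hR : PruferInDimZero R)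
    (hM : IsLocalRing.maximalIdeal R = (Ideal.span {a}).radical) (ha : a ∈ R⁰)
    (ha' : a ∈ IsLocalRing.maximalIdeal R) :
    ringKrullDim (R ⧸ ⨅ k : ℕ, Ideal.span {a} ^ (k + 1)) = 1 := by
  have := hR.isDomain_quotient hM ha ha'
  have : IsLocalRing (R ⧸ ⨅ k : ℕ, Ideal.span {a} ^ (k + 1)) :=
    .of_surjective' (Ideal.Quotient.mk _) Ideal.Quotient.mk_surjective
  refine ringKrullDim_eq_one_iff_of_isLocalRing_isDomain.mpr ⟨fun hF ↦ ?_, fun x hx y hy ↦ ?_⟩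
  · have hne : Ideal.Quotient.mk (⨅ k : ℕ, Ideal.span {a} ^ (k + 1)) a ≠ 0 := fun h ↦
      pow_notMem_iInf_span_pow ha ha' 1
        (by rw [pow_one]; exact Ideal.Quotient.eq_zero_iff_mem.mp h)
    obtain ⟨b, hb⟩ := hF.mul_inv_cancel hne
    obtain ⟨b, rfl⟩ := Ideal.Quotient.mk_surjective b
    rw [← map_mul, ← map_one (Ideal.Quotient.mk _), Ideal.Quotient.eq] at hb
    obtain ⟨c, hc⟩ := mem_iInf_span_pow.mp hb 0
    exact ha' (IsUnit.of_mul_eq_one (b - c) (by linear_combination hc))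
  · obtain ⟨x, rfl⟩ := Ideal.Quotient.mk_surjective x
    obtain ⟨y, rfl⟩ := Ideal.Quotient.mk_surjective y
    obtain ⟨n, hn⟩ := (hR.mem_iInf_or_dvd_pow hM ha x).resolve_left
      fun h ↦ hx (Ideal.Quotient.eq_zero_iff_mem.mpr h)
    have hyM : y ∈ IsLocalRing.maximalIdeal R := fun hu ↦ hy (hu.map (Ideal.Quotient.mk _))
    rw [hM] at hyM
    obtain ⟨m, hm⟩ := hyM
    have hdvd : x ∣ y ^ (m * n) := by
      rw [pow_mul]
      exact hn.trans (pow_dvd_pow_of_dvd (Ideal.mem_span_singleton.mp hm) n)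
    refine ⟨m * n, Ideal.mem_span_singleton.mpr ?_⟩
    rw [← map_pow]
    exact map_dvd _ hdvd

/-- Only the Bézout property of the valuation domain `R ⧸ ⋂ (a ^ k)` is needed here. -/
lemma pruferInDimZero_of_isBezout_quotient (ha : a ∈ R⁰) (ha' : a ∈ IsLocalRing.maximalIdeal R)
    [IsBezout (R ⧸ ⨅ k : ℕ, Ideal.span {a} ^ (k + 1))] : PruferInDimZero R := by
  intro J hfg _ hdim
  obtain ⟨n, hn⟩ := exists_pow_mem_of_ringKrullDim_quotient_le_zero ha' hdim
  set N := ⨅ k : ℕ, Ideal.span {a} ^ (k + 1) with hN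
  obtain ⟨g, hg⟩ := IsBezout.isPrincipal_of_FG _ (hfg.map (Ideal.Quotient.mk N))
  have hgJ : g ∈ J.map (Ideal.Quotient.mk N) := hg ▸ Submodule.mem_span_singleton_self g
  obtain ⟨b, hbJ, rfl⟩ :=
    (Ideal.mem_map_iff_of_surjective _ Ideal.Quotient.mk_surjective).mp hgJ
  have hJ : ∀ x ∈ J, ∃ c, x - b * c ∈ N := by
    intro x hx
    have hx' := Ideal.mem_map_of_mem (Ideal.Quotient.mk N) hx
    rw [hg, Ideal.submodule_span_eq, Ideal.mem_span_singleton] at hx'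
    obtain ⟨c, hc⟩ := hx'
    obtain ⟨c, rfl⟩ := Ideal.Quotient.mk_surjective c
    exact ⟨c, Ideal.Quotient.eq.mp (by rw [hc, map_mul])⟩
  have hb : b ∣ a ^ n := by
    obtain ⟨c, hc⟩ := hJ _ hn
    obtain ⟨d, hd⟩ := mem_iInf_span_pow.mp hc n
    have hu : IsUnit (1 - a * d) :=
      (IsLocalRing.isUnit_or_isUnit_one_sub_self (a * d)).resolve_left
        fun h ↦ ha' (isUnit_of_mul_isUnit_left h)
    exact hu.dvd_mul_right.mp ⟨c, by linear_combination hd⟩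
  have hbreg : b ∈ R⁰ := by
    obtain ⟨c, hc⟩ := hb
    exact (mul_mem_nonZeroDivisors.mp (hc ▸ pow_mem ha n)).1
  have hJb : J = Ideal.span {b} := by
    refine le_antisymm (fun x hx ↦ ?_) ((Ideal.span_singleton_le_iff_mem _).mpr hbJ)
    obtain ⟨c, hc⟩ := hJ x hx
    have : b ∣ x - b * c :=
      hb.trans ((pow_dvd_pow a n.le_succ).trans (mem_iInf_span_pow.mp hc n))
    exact Ideal.mem_span_singleton.mpr ((dvd_sub_left (dvd_mul_right b c)).mp this)
  exact hJb ▸ isQInvertible_span_singleton hbreg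

end

/-- Let `R` be a local ring whose maximal ideal is the radical of a regular principal ideal
`I`.  Then `R` is Prüfer in dimension zero iff `R* = R/(∩_{k>0} I^k)` is a valuation domain
(an integral domain whose ideals are totally ordered by inclusion) of Krull dimension one. -/
theorem prufer_in_dim_zero_iff_valuation {R : Type*} [CommRing R] [IsLocalRing R]
    (I : Ideal R) (hIprin : I.IsPrincipal) (hIreg : ∃ r ∈ I, r ∈ R⁰)
    (hM : IsLocalRing.maximalIdeal R = I.radical) :
    PruferInDimZero R ↔
      (IsDomain (R ⧸ ⨅ k : ℕ, I ^ (k + 1)) ∧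
       (∀ J J' : Ideal (R ⧸ ⨅ k : ℕ, I ^ (k + 1)), J ≤ J' ∨ J' ≤ J) ∧
       ringKrullDim (R ⧸ ⨅ k : ℕ, I ^ (k + 1)) = 1) := by
  obtain ⟨a, rfl⟩ := hIprin
  rw [Ideal.submodule_span_eq] at *
  have ha : a ∈ R⁰ := by
    obtain ⟨r, hr, hr'⟩ := hIreg
    obtain ⟨c, rfl⟩ := Ideal.mem_span_singleton.mp hr
    exact (mul_mem_nonZeroDivisors.mp hr').1
  have ha' : a ∈ IsLocalRing.maximalIdeal R :=
    hM ▸ Ideal.le_radical (Ideal.mem_span_singleton_self a)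
  refine ⟨fun hR ↦ ⟨hR.isDomain_quotient hM ha ha', hR.ideal_total_quotient hM ha,
    hR.ringKrullDim_quotient hM ha ha'⟩, fun ⟨_, htot, _⟩ ↦ ?_⟩
  have := ValuationRing.iff_ideal_total.mpr ⟨htot⟩
  exact pruferInDimZero_of_isBezout_quotient ha ha'
end

section
/- Let R be a local ring with finitely generated maximal ideal M. The following are equivalent: (1) M is the radical of a principal ideal of R; (2) the M-adic completion R̂ of R is a (Noetherian) ring of Krull dimension at most one; (3) there is an integer n > 0 such that every M-primary ideal of R can be generated by n elements; (4) for each M-primary ideal I of R there exist an integer n > 0 and an element x ∈ I^n such that I^{2n} = x·I^n. -/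
/-!
Write `M` for the maximal ideal. As `M` is finitely generated, every quotient of `R` by an ideal
containing a power of `M` is Artinian, so `M`-primary ideals are finitely generated with quotients
of finite length. The implications proved are `1 ↔ 2`, `1 → 3`, `3 → 4` and `4 → 1`.

* `1 → 3`. If `M = √(a)` and `I` is `M`-primary, comparing the two ways of computing the length of
  `R / aI` gives `ℓ(I / aI) ≤ ℓ(R / aR)` (`length_le`). Hence the number of generators of `I`,
  which is `ℓ(I / MI)`, is at most `ℓ(R / aR)`.

* `1 → 2`. Some power of the maximal ideal of the completion `A` lies in `aA`. By Cohen's theorem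
  it suffices that primes `P` of `A` are finitely generated. If `a ∈ P`, then `P` is maximal.
  Otherwise `P ∩ aA = aP`, so lifts to `P` of finitely many generators of the image of `P` in the
  Noetherian module `A / aA` generate `P` modulo `aP`, and they generate `P` by completeness
  (`isNoetherianRing_of_pow_le`). The dimension bound is Krull's principal ideal theorem.

* `2 → 1`. In a Noetherian local ring of dimension at most one the maximal ideal is the radical of
  some `(b)`. If the `k`-th power of the maximal ideal of the completion lies in `(b)`, and `a` in
  `R` agrees with `b` modulo `M ^ (k + 1)`, then `M ^ k ≤ (a) + M ^ (k + 1)`, and Nakayama's lemma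
  gives `M ^ k ≤ (a)`.

* `3 → 4`. Work in the Rees algebra `S` of `I`. If all powers of `I` are generated by `n` elements
  and `u`, `v` are homogeneous of the same positive degree, then the `n + 1` products
  `u ^ i * v ^ (n - i)` satisfy a relation modulo `M S` whose coefficients are zero or units
  (`exists_relation`). Dividing out powers of `u` and `v`, the relation reads
  `u ^ a * v ^ e * p ∈ M S` with `p` a binary form in `u`, `v` whose extreme coefficients are
  units. The homogeneous element `(u * v) ^ (s + 1) + (p * (u + v)) ^ 2`, where `s` is the degree
  of `p` as a form, then lies only in those primes over `M S` that contain both `u` and `v`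
  (`mem_of_form_mem`). The exponents are chosen so that both summands have the same degree. No
  general linear combination of `u` and `v` is used, so a finite residue field causes no trouble.
  Induction on generators of `I` yields one homogeneous `Q` such that every prime containing
  `Q` and `M S` contains the whole positive part of `S` (`exists_grade_finset`); with Nakayama's
  lemma, `Q` gives an element `q ∈ I ^ m` with `I ^ (t + m) = q I ^ t`, and a power of `q` is the
  element wanted.

* `4 → 1`. Apply the hypothesis to `I = M`.
-/

namespace PreStable

open IsLocalRing

/-! ### Artinian quotients -/

/-- Every prime of `R / J` is the image of the finitely generated ideal `M`, so `R / J` is Noetherian by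
Cohen's theorem, and its maximal ideal is nilpotent. -/
theorem isArtinianRing_quotient {R : Type*} [CommRing R] [IsLocalRing R]
    (hfg : (maximalIdeal R).FG) {J : Ideal R} {k : ℕ} (hk : maximalIdeal R ^ k ≤ J) :
    IsArtinianRing (R ⧸ J) := by
  by_cases hJ : J = ⊤
  · have : Subsingleton (R ⧸ J) := Ideal.Quotient.subsingleton_iff.mpr hJ
    infer_instance
  have : Nontrivial (R ⧸ J) := Ideal.Quotient.nontrivial_iff.mpr hJ
  have hprime : ∀ P : Ideal (R ⧸ J), P.IsPrime →
      P = (maximalIdeal R).map (Ideal.Quotient.mk J) := by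
    intro P hP
    have h1 : maximalIdeal R ≤ P.comap (Ideal.Quotient.mk J) := by
      refine Ideal.IsPrime.le_of_pow_le (n := k) (hk.trans ?_)
      intro x hx
      rw [Ideal.mem_comap, Ideal.Quotient.eq_zero_iff_mem.mpr hx]
      exact P.zero_mem
    have h2 : P.comap (Ideal.Quotient.mk J) = maximalIdeal R :=
      ((maximalIdeal.isMaximal R).eq_of_le
        (Ideal.IsPrime.ne_top inferInstance) h1).symm
    rw [← h2, Ideal.map_comap_of_surjective _ Ideal.Quotient.mk_surjective]
  have : IsNoetherianRing (R ⧸ J) := by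
    refine IsNoetherianRing.of_prime fun P hP ↦ ?_
    rw [hprime P hP]
    exact hfg.map _
  have : IsLocalRing (R ⧸ J) :=
    IsLocalRing.of_surjective' (Ideal.Quotient.mk J) Ideal.Quotient.mk_surjective
  rw [isArtinianRing_iff_isNilpotent_maximalIdeal]
  refine ⟨k, ?_⟩
  rw [hprime (maximalIdeal (R ⧸ J)) inferInstance, ← Ideal.map_pow, Ideal.zero_eq_bot,
    Ideal.map_eq_bot_iff_le_ker, Ideal.mk_ker]
  exact hk

theorem length_quotient_ne_top {R : Type*} [CommRing R] [IsLocalRing R]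
    (hfg : (maximalIdeal R).FG) {J : Ideal R} {k : ℕ} (hk : maximalIdeal R ^ k ≤ J) :
    Module.length R (R ⧸ J) ≠ ⊤ := by
  have := isArtinianRing_quotient hfg hk
  rw [Module.length_eq_of_surjective (R := R ⧸ J) (S := R) (M := R ⧸ J)
    Ideal.Quotient.mk_surjective]
  exact Module.length_ne_top

theorem fg_of_pow_le {R : Type*} [CommRing R] [IsLocalRing R]
    (hfg : (maximalIdeal R).FG) {I : Ideal R} {k : ℕ} (hk : maximalIdeal R ^ k ≤ I) :
    I.FG := by
  have hN : IsNoetherian R (R ⧸ maximalIdeal R ^ k) :=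
    (isFiniteLength_iff_isNoetherian_isArtinian.mp
      (Module.length_ne_top_iff.mp (length_quotient_ne_top hfg le_rfl))).1
  refine Submodule.fg_of_fg_map_of_fg_inf_ker (maximalIdeal R ^ k).mkQ (hN.noetherian _) ?_
  rw [Submodule.ker_mkQ, inf_eq_right.mpr hk]
  exact hfg.pow

theorem exists_pow_le {R : Type*} [CommRing R] [IsLocalRing R]
    (hfg : (maximalIdeal R).FG) {I : Ideal R} (hI : I.radical = maximalIdeal R) :
    ∃ k, maximalIdeal R ^ k ≤ I := by
  obtain ⟨k, hk⟩ := I.exists_radical_pow_le_of_fg (by rwa [hI])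
  exact ⟨k, by rwa [hI] at hk⟩

/-! ### Bounding the number of generators -/

/-- If `R / I` has finite length, then `ℓ(I / aI) ≤ ℓ(R / aR)`. Indeed `ℓ(R / aI)` equals
`ℓ(I / aI) + ℓ(R / I)`, and it is also at most `ℓ(R / I) + ℓ(R / aR)`, since `aR / aI` is the image
of `R / I` under multiplication by `a`. -/
theorem length_le {R : Type*} [CommRing R] (a : R) (I : Ideal R)
    (hfin : Module.length R (R ⧸ I) ≠ ⊤) :
    Module.length R (I ⧸ (Ideal.span {a} • ⊤ : Submodule R I)) ≤
      Module.length R (R ⧸ Ideal.span {a}) := by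
  set N : Submodule R I := Ideal.span {a} • ⊤ with hN
  set K : Ideal R := Ideal.span {a} * I with hK
  have hNK : N = Submodule.comap I.subtype K := by
    apply Submodule.map_injective_of_injective I.injective_subtype
    rw [hN, Submodule.map_smul'', Submodule.map_subtype_top, Submodule.map_comap_subtype,
      inf_eq_right.mpr Ideal.mul_le_right]
    rfl
  have e1 : Module.length R (R ⧸ K) =
      Module.length R (I ⧸ N) + Module.length R (R ⧸ I) := by
    refine Module.length_eq_add_of_exact (N.mapQ K I.subtype hNK.le)
      (Submodule.factor (Ideal.mul_le_right : K ≤ I)) ?_ (Submodule.factor_surjective _) ?_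
    · rw [← LinearMap.ker_eq_bot, Submodule.ker_mapQ, ← hNK, Submodule.mkQ_map_self]
    · intro x
      obtain ⟨x, rfl⟩ := Submodule.mkQ_surjective _ x
      constructor
      · intro h
        have hx : x ∈ I := (Submodule.Quotient.mk_eq_zero I).mp h
        exact ⟨N.mkQ ⟨x, hx⟩, by simp⟩
      · rintro ⟨y, hy⟩
        obtain ⟨y, rfl⟩ := Submodule.mkQ_surjective _ y
        rw [← hy]
        exact (Submodule.Quotient.mk_eq_zero I).mpr y.2
  have hKa : K ≤ Ideal.span {a} := Ideal.mul_le_left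
  set φ : R ⧸ I →ₗ[R] R ⧸ K := Submodule.mapQ I K (LinearMap.mulLeft R a) (fun x hx ↦ by
      exact Ideal.mul_mem_mul (Ideal.mem_span_singleton_self a) hx) with hφ
  have e2 : Module.length R (R ⧸ K) =
      Module.length R (LinearMap.range φ) + Module.length R (R ⧸ Ideal.span {a}) := by
    refine Module.length_eq_add_of_exact (LinearMap.range φ).subtype
      (Submodule.factor hKa) (Submodule.subtype_injective _) (Submodule.factor_surjective _) ?_
    intro x
    obtain ⟨x, rfl⟩ := Submodule.mkQ_surjective _ x
    constructor
    · intro h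
      have hx : x ∈ Ideal.span {a} := (Submodule.Quotient.mk_eq_zero _).mp h
      obtain ⟨r, rfl⟩ := Ideal.mem_span_singleton'.mp hx
      exact ⟨⟨_, I.mkQ r, rfl⟩, congrArg K.mkQ (mul_comm a r)⟩
    · rintro ⟨⟨_, y, rfl⟩, hy⟩
      obtain ⟨y, rfl⟩ := Submodule.mkQ_surjective _ y
      rw [← hy]
      exact (Submodule.Quotient.mk_eq_zero _).mpr
        (Ideal.mul_mem_right _ _ (Ideal.mem_span_singleton_self a))
  have e3 : Module.length R (LinearMap.range φ) ≤ Module.length R (R ⧸ I) :=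
    Module.length_le_of_surjective _ φ.surjective_rangeRestrict
  have : Module.length R (I ⧸ N) + Module.length R (R ⧸ I) ≤
      Module.length R (R ⧸ Ideal.span {a}) + Module.length R (R ⧸ I) := by
    rw [← e1, e2, add_comm]
    gcongr
  exact (ENat.add_le_add_iff_right hfin).mp this

theorem spanFinrank_le {R : Type*} [CommRing R] [IsLocalRing R]
    (hfg : (maximalIdeal R).FG) {a : R} (ha : maximalIdeal R = (Ideal.span {a}).radical)
    {I : Ideal R} (hI : I.radical = maximalIdeal R) :
    I.spanFinrank ≤ (Module.length R (R ⧸ Ideal.span {a})).toNat := by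
  obtain ⟨k, hk⟩ := exists_pow_le hfg hI
  obtain ⟨l, hl⟩ := exists_pow_le hfg ha.symm
  have hIfg := fg_of_pow_le hfg hk
  have ham : Ideal.span {a} ≤ maximalIdeal R := ha ▸ Ideal.le_radical
  have h1 := length_le a I (length_quotient_ne_top hfg hk)
  have h2 : Module.length R (I ⧸ (maximalIdeal R • ⊤ : Submodule R I)) ≤
      Module.length R (I ⧸ (Ideal.span {a} • ⊤ : Submodule R I)) :=
    Module.length_le_of_surjective _ (Submodule.factor_surjective
      (Submodule.smul_mono_left ham))
  rw [spanFinrank_eq_finrank_quotient I hIfg]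
  let _ : Field (R ⧸ maximalIdeal R) := Ideal.Quotient.field _
  have : Module.Finite R I := Module.Finite.iff_fg.mpr hIfg
  have : Module.Finite (R ⧸ maximalIdeal R) (I ⧸ (maximalIdeal R • ⊤ : Submodule R I)) :=
    Module.Finite.of_restrictScalars_finite R _ _
  have h3 : Module.length R (I ⧸ (maximalIdeal R • ⊤ : Submodule R I)) =
    Module.finrank (R ⧸ maximalIdeal R) (I ⧸ (maximalIdeal R • ⊤ : Submodule R I)) := by
    rw [Module.length_eq_of_surjective (R := R ⧸ maximalIdeal R) (S := R)
      Ideal.Quotient.mk_surjective, Module.length_eq_finrank]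
  have h4 := h2.trans h1
  rw [h3] at h4
  have := ENat.toNat_le_toNat h4 (length_quotient_ne_top hfg hl)
  simpa using this

theorem one_imp_three {R : Type*} [CommRing R] [IsLocalRing R]
    (hfg : (maximalIdeal R).FG) {a : R} (ha : maximalIdeal R = (Ideal.span {a}).radical) :
    ∃ n : ℕ, 0 < n ∧ ∀ I : Ideal R, I.IsPrimary → I.radical = maximalIdeal R →
           ∃ s : Finset R, s.card ≤ n ∧ Ideal.span (s : Set R) = I := by
  refine ⟨(Module.length R (R ⧸ Ideal.span {a})).toNat + 1, by omega, fun I _ hI ↦ ?_⟩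
  obtain ⟨k, hk⟩ := exists_pow_le hfg hI
  obtain ⟨s, hs, hs'⟩ := Submodule.FG.exists_span_finset_card_eq_spanFinrank (fg_of_pow_le hfg hk)
  exact ⟨s, by rw [hs]; exact (spanFinrank_le hfg ha hI).trans (by omega), hs'⟩

/-! ### Completion -/

/-- Finite powers of a precomplete ring are precomplete: coordinates can be treated separately. -/
theorem isPrecomplete_pi {A : Type*} [CommRing A] (m : Ideal A) [IsPrecomplete m A]
    {ι : Type*} [Fintype ι] : IsPrecomplete m (ι → A) := by
  classical
  have key : ∀ (n : ℕ) (x : ι → A), x ∈ (m ^ n • ⊤ : Submodule A (ι → A)) ↔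
      ∀ i, x i ∈ (m ^ n • ⊤ : Submodule A A) := by
    intro n x
    constructor
    · intro hx i
      have := Submodule.mem_map_of_mem (f := LinearMap.proj (R := A) (φ := fun _ : ι ↦ A) i) hx
      rw [Submodule.map_smul''] at this
      exact Submodule.smul_mono le_rfl le_top this
    · intro hx
      rw [pi_eq_sum_univ x]
      refine Submodule.sum_mem _ fun i _ ↦ Submodule.smul_mem_smul ?_ trivial
      simpa using hx i
  refine ⟨fun f hf ↦ ?_⟩
  have : ∀ i, ∃ L : A, ∀ n, f n i ≡ L [SMOD (m ^ n • ⊤ : Submodule A A)] := by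
    intro i
    refine IsPrecomplete.prec' (I := m) (fun n ↦ f n i) fun {a b} hab ↦ ?_
    have := hf hab
    rw [SModEq.sub_mem, key] at this
    exact SModEq.sub_mem.mpr (this i)
  choose L hL using this
  refine ⟨L, fun n ↦ ?_⟩
  rw [SModEq.sub_mem, key]
  exact fun i ↦ SModEq.sub_mem.mp (hL i n)

/-- A complete local ring with finitely generated maximal ideal is Noetherian as soon as a power of its
maximal ideal lies in a principal ideal. -/
theorem isNoetherianRing_of_pow_le {A : Type*} [CommRing A] [IsLocalRing A]
    [IsAdicComplete (maximalIdeal A) A] (hfg : (maximalIdeal A).FG) {a : A} {k : ℕ}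
    (ha : a ∈ maximalIdeal A) (hk : maximalIdeal A ^ k ≤ Ideal.span {a}) :
    IsNoetherianRing A := by
  classical
  refine IsNoetherianRing.of_prime fun P hP ↦ ?_
  by_cases haP : a ∈ P
  · have h1 : maximalIdeal A ≤ P :=
      hP.le_of_pow_le (hk.trans ((Ideal.span_singleton_le_iff_mem _).mpr haP))
    rwa [← (maximalIdeal.isMaximal A).eq_of_le hP.ne_top h1]
  have hN : IsNoetherian A (A ⧸ Ideal.span {a}) :=
    (isFiniteLength_iff_isNoetherian_isArtinian.mp
      (Module.length_ne_top_iff.mp (length_quotient_ne_top hfg hk))).1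
  set π := (Ideal.span {a}).mkQ
  obtain ⟨r, g, hg⟩ := Submodule.fg_iff_exists_fin_generating_family.mp
    (hN.noetherian (Submodule.map π P))
  have hgP : ∀ i, ∃ p ∈ P, π p = g i := fun i ↦ by
    have : g i ∈ Submodule.map π P := hg ▸ Submodule.subset_span ⟨i, rfl⟩
    simpa using this
  choose p hp hpg using hgP
  let f : (Fin r → A) →ₗ[A] P := Fintype.linearCombination A fun i ↦ (⟨p i, hp i⟩ : P)
  have hsurj : Function.Surjective
      (Submodule.mkQ (maximalIdeal A • ⊤ : Submodule A P) ∘ₗ f) := by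
    intro x
    obtain ⟨x, rfl⟩ := Submodule.mkQ_surjective _ x
    have hx : π x ∈ Submodule.span A (Set.range g) := hg ▸ Submodule.mem_map_of_mem x.2
    obtain ⟨c, hc⟩ := (Submodule.mem_span_range_iff_exists_fun A).mp hx
    have hfc : ((f c : P) : A) = ∑ i, c i * p i := by
      simp [f, Fintype.linearCombination_apply]
    have hxa : (f c : A) - x ∈ Ideal.span {a} := by
      rw [← Submodule.Quotient.mk_eq_zero, Submodule.Quotient.mk_sub, sub_eq_zero, hfc]
      change π _ = π _
      rw [← hc, map_sum]
      exact Finset.sum_congr rfl fun i _ ↦ by rw [← hpg, ← smul_eq_mul, map_smul]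
    obtain ⟨y, hy⟩ := Ideal.mem_span_singleton'.mp hxa
    have hyP : y ∈ P := by
      refine (hP.mem_or_mem (?_ : y * a ∈ P)).resolve_right haP
      rw [hy]
      exact P.sub_mem (f c).2 x.2
    -- `f c - x = y * a` with `y ∈ P`, so the difference lies in `aP`.
    refine ⟨c, (Submodule.Quotient.eq _).mpr ?_⟩
    have : f c - x = a • (⟨y, hyP⟩ : P) := Subtype.ext (by simp [← hy, mul_comm])
    rw [this]
    exact Submodule.smul_mem_smul ha trivial
  -- The completeness hypothesis upgrades surjectivity modulo the maximal ideal to surjectivity.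
  have := isPrecomplete_pi (maximalIdeal A) (ι := Fin r)
  have hH : IsHausdorff (maximalIdeal A) P := by
    refine ⟨fun x hx ↦ Subtype.ext (IsHausdorff.haus (I := maximalIdeal A) inferInstance _
      fun n ↦ ?_)⟩
    have := hx n
    rw [SModEq.zero] at this ⊢
    have := Submodule.mem_map_of_mem (f := P.subtype) this
    rw [Submodule.map_smul''] at this
    exact Submodule.smul_mono le_rfl le_top this
  have hf := surjective_of_mkQ_comp_surjective hsurj
  exact Module.Finite.iff_fg.mp (Module.Finite.of_surjective f hf)

theorem one_imp_two {R : Type*} [CommRing R] [IsLocalRing R]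
    (hfg : (maximalIdeal R).FG) {a : R} (ha : maximalIdeal R = (Ideal.span {a}).radical) :
    IsNoetherianRing (AdicCompletion (maximalIdeal R) R) ∧
         ringKrullDim (AdicCompletion (maximalIdeal R) R) ≤ 1 := by
  obtain ⟨k, hk⟩ := exists_pow_le hfg ha.symm
  have ham : a ∈ maximalIdeal R := ha ▸ Ideal.le_radical (Ideal.mem_span_singleton_self a)
  have := AdicCompletion.isLocalRing_of_fg hfg
  have := AdicCompletion.isAdicComplete_of_fg hfg
  have hmax := AdicCompletion.maximalIdeal_eq_map_of_fg hfg
  set A := AdicCompletion (maximalIdeal R) R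
  have hk' : maximalIdeal A ^ k ≤ Ideal.span {algebraMap R A a} := by
    rw [hmax, ← Ideal.map_pow, ← Set.image_singleton, ← Ideal.map_span]
    exact Ideal.map_mono hk
  have ham' : algebraMap R A a ∈ maximalIdeal A := by
    rw [hmax]
    exact Ideal.mem_map_of_mem _ ham
  have hN : IsNoetherianRing A :=
    isNoetherianRing_of_pow_le (by rw [hmax]; exact hfg.map _) ham' hk'
  refine ⟨hN, ?_⟩
  rw [← maximalIdeal_height_eq_ringKrullDim]
  have hmin : maximalIdeal A ∈ (Ideal.span {algebraMap R A a}).minimalPrimes := by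
    refine ⟨⟨inferInstance, (Ideal.span_singleton_le_iff_mem _).mpr ham'⟩, ?_⟩
    rintro q ⟨hq, haq⟩ -
    exact hq.le_of_pow_le (hk'.trans haq)
  have : (Ideal.span {algebraMap R A a}).IsPrincipal := ⟨_, rfl⟩
  exact_mod_cast Ideal.height_le_one_of_isPrincipal_of_mem_minimalPrimes _ _ hmin

theorem two_imp_one {R : Type*} [CommRing R] [IsLocalRing R]
    (hfg : (maximalIdeal R).FG)
    (hN : IsNoetherianRing (AdicCompletion (maximalIdeal R) R))
    (hdim : ringKrullDim (AdicCompletion (maximalIdeal R) R) ≤ 1) :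
    ∃ a : R, maximalIdeal R = (Ideal.span {a}).radical := by
  have := AdicCompletion.isLocalRing_of_fg hfg
  have hmax := AdicCompletion.maximalIdeal_eq_map_of_fg hfg
  have hb : ∃ b : AdicCompletion (maximalIdeal R) R,
      maximalIdeal (AdicCompletion (maximalIdeal R) R) = (Ideal.span {b}).radical := by
    set A := AdicCompletion (maximalIdeal R) R
    rw [← maximalIdeal_height_eq_ringKrullDim] at hdim
    obtain ⟨s, hs, hc⟩ := (maximalIdeal A).exists_finset_card_eq_height_of_isNoetherianRing
    rw [← hc] at hdim
    have hc1 : s.card ≤ 1 := by exact_mod_cast hdim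
    have hrad : maximalIdeal A = (Ideal.span (s : Set A)).radical := by
      rw [Ideal.radical_eq_sInf]
      refine le_antisymm (le_sInf fun q hq ↦ ?_) (sInf_le ⟨hs.1.2, hs.1.1⟩)
      exact hs.2 ⟨hq.2, hq.1⟩ (le_maximalIdeal hq.2.ne_top)
    obtain ⟨b, hb⟩ := Finset.card_le_one_iff_subset_singleton.mp hc1
    rcases Finset.subset_singleton_iff.mp hb with rfl | rfl
    · exact ⟨0, by rw [hrad]; simp⟩
    · exact ⟨b, by rw [hrad, Finset.coe_singleton]⟩
  obtain ⟨b, hb⟩ := hb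
  obtain ⟨k, hk⟩ := exists_pow_le (hmax ▸ hfg.map _) hb.symm
  set ev := AdicCompletion.evalₐ (maximalIdeal R) (k + 1) with hev
  obtain ⟨a, ha⟩ := Ideal.Quotient.mk_surjective (ev b)
  have hcomp : ∀ x : R, ev (algebraMap R _ x) = Ideal.Quotient.mk _ x := fun x ↦ ev.commutes x
  refine ⟨a, ?_⟩
  have ham : a ∈ maximalIdeal R := by
    intro hu
    have hub : b ∈ maximalIdeal (AdicCompletion (maximalIdeal R) R) :=
      hb ▸ Ideal.le_radical (Ideal.mem_span_singleton_self b)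
    rw [hmax] at hub
    have := Ideal.mem_map_of_mem ev.toRingHom hub
    rw [Ideal.map_map] at this
    have hc : ev.toRingHom.comp (algebraMap R _) =
      Ideal.Quotient.mk (maximalIdeal R ^ (k + 1)) := RingHom.ext hcomp
    rw [hc] at this
    change ev b ∈ _ at this
    rw [← ha, Ideal.mem_map_iff_of_surjective _ Ideal.Quotient.mk_surjective] at this
    obtain ⟨y, hy, hya⟩ := this
    have h1 := Ideal.pow_le_self (Nat.succ_ne_zero k) (Ideal.Quotient.eq.mp hya)
    have : a ∈ maximalIdeal R := by
      have := (maximalIdeal R).sub_mem hy h1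
      simpa using this
    exact this hu
  have hle : maximalIdeal R ^ k ≤ Ideal.span {a} := by
    refine Submodule.le_of_le_smul_of_le_jacobson_bot (I := maximalIdeal R) hfg.pow
      (IsLocalRing.jacobson_eq_maximalIdeal _ bot_ne_top).ge fun x hx ↦ ?_
    have h1 : algebraMap R (AdicCompletion (maximalIdeal R) R) x ∈ Ideal.span {b} := by
      apply hk
      rw [hmax, ← Ideal.map_pow]
      exact Ideal.mem_map_of_mem _ hx
    obtain ⟨y, hy⟩ := Ideal.mem_span_singleton'.mp h1
    obtain ⟨r, hr⟩ := Ideal.Quotient.mk_surjective (ev y)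
    have h2 := congrArg ev hy
    rw [map_mul, hcomp, ← hr, ← ha, ← map_mul] at h2
    have h3 := Ideal.Quotient.eq.mp h2.symm
    rw [pow_succ'] at h3
    have hx' : x = r * a + (x - r * a) := by ring
    rw [hx']
    exact Submodule.add_mem_sup (Ideal.mul_mem_left _ _ (Ideal.mem_span_singleton_self a)) h3
  refine le_antisymm (fun x hx ↦ ⟨k, hle (Ideal.pow_mem_pow hx k)⟩) ?_
  exact (maximalIdeal.isMaximal R).isPrime.radical_le_iff.mpr
    ((Ideal.span_singleton_le_iff_mem _).mpr ham)

/-! ### Binary forms modulo the maximal ideal -/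

/-- Any `n + 1` elements of an ideal generated by at most `n` elements satisfy a linear relation modulo
`M` times the ideal, with coefficients that are zero or units and not all zero. Their coefficient
vectors over the residue field are linearly dependent, and zero is lifted to zero. -/
theorem exists_relation {R : Type*} [CommRing R] [IsLocalRing R] {n : ℕ} (s : Finset R)
    (hs : s.card ≤ n) (w : ℕ → R) (hw : ∀ i ≤ n, w i ∈ Ideal.span (s : Set R)) :
    ∃ c : ℕ → R, (∀ i, c i = 0 ∨ IsUnit (c i)) ∧ (∃ i ≤ n, IsUnit (c i)) ∧
      ∑ i ∈ Finset.range (n + 1), c i * w i ∈ maximalIdeal R * Ideal.span (s : Set R) := by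
  classical
  have h1 : ∀ i : Fin (n + 1), ∃ A : s → R, ∑ g, A g * (g : R) = w i := by
    intro i
    have := hw i (Nat.lt_succ_iff.mp i.2)
    rw [← Subtype.range_coe (s := (s : Set R))] at this
    exact (Submodule.mem_span_range_iff_exists_fun R).mp this
  choose A hA using h1
  have h2 : ¬ LinearIndependent (ResidueField R) fun (i : Fin (n + 1)) (g : s) ↦
      residue R (A i g) := by
    intro h
    have := h.fintype_card_le_finrank
    simp at this
    omega
  obtain ⟨g, hg, i₀, hi₀⟩ := Fintype.not_linearIndependent_iff.mp h2
  have h3 : ∀ x : ResidueField R, ∃ y : R, residue R y = x ∧ (y = 0 ∨ IsUnit y) := by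
    intro x
    by_cases hx : x = 0
    · exact ⟨0, by simp [hx], Or.inl rfl⟩
    · obtain ⟨y, rfl⟩ := residue_surjective x
      exact ⟨y, rfl, Or.inr ((residue_ne_zero_iff_isUnit y).mp hx)⟩
  choose lift hlift h_lift using h3
  refine ⟨fun i ↦ if h : i < n + 1 then lift (g ⟨i, h⟩) else 0, fun i ↦ ?_, ⟨i₀, by omega, ?_⟩, ?_⟩
  · dsimp only
    split_ifs
    · exact h_lift _
    · exact Or.inl rfl
  · simp only [i₀.2, dif_pos]
    exact (residue_ne_zero_iff_isUnit _).mp (by rwa [hlift])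
  · rw [Finset.sum_range]
    simp only [Fin.is_lt, dif_pos, Fin.eta, ← hA, Finset.mul_sum]
    rw [Finset.sum_comm]
    refine Ideal.sum_mem _ fun y _ ↦ ?_
    simp only [← mul_assoc]
    rw [← Finset.sum_mul]
    refine Ideal.mul_mem_mul ?_ (Ideal.subset_span y.2)
    rw [← residue_eq_zero_iff, map_sum]
    simpa [hlift] using congrFun hg y

/-- Factoring the largest possible powers of `u` and `v` out of a binary form whose coefficients are
zero or units leaves a form `p` whose two extreme coefficients are units; `p` is therefore congruent
to a unit multiple of a power of `v` modulo `u`, and conversely. -/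
theorem exists_factor {S : Type*} [CommRing S] (u v : S) {n : ℕ} (c : ℕ → S)
    (hc : ∀ i, c i = 0 ∨ IsUnit (c i)) (hex : ∃ i ≤ n, IsUnit (c i)) :
    ∃ (a e s : ℕ) (p : S), p = ∑ j ∈ Finset.range (s + 1), c (a + j) * (u ^ j * v ^ (s - j)) ∧
      (∑ i ∈ Finset.range (n + 1), c i * (u ^ i * v ^ (n - i)) = u ^ a * v ^ e * p) ∧
      (∃ α, IsUnit α ∧ u ∣ p - α * v ^ s) ∧ (∃ β, IsUnit β ∧ v ∣ p - β * u ^ s) := by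
  classical
  set F := (Finset.range (n + 1)).filter fun i ↦ IsUnit (c i) with hF
  have hne : F.Nonempty := by
    obtain ⟨i, hi, hi'⟩ := hex
    exact ⟨i, by simp [hF, hi']; omega⟩
  set a := F.min' hne
  set b := F.max' hne
  have hab : a ≤ b := F.min'_le_max' hne
  have ha : a ∈ F := F.min'_mem hne
  have hb : b ∈ F := F.max'_mem hne
  have hbn : b ≤ n := by simp [hF] at hb; omega
  have hsupp : ∀ i ∈ Finset.range (n + 1), i ∉ Finset.Ico a (b + 1) → c i = 0 := by
    intro i hi hi'
    refine (hc i).resolve_right fun hu ↦ hi' ?_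
    have hiF : i ∈ F := by simp only [hF, Finset.mem_filter]; exact ⟨hi, hu⟩
    rw [Finset.mem_Ico]
    exact ⟨F.min'_le i hiF, Nat.lt_succ_of_le (F.le_max' i hiF)⟩
  refine ⟨a, n - b, b - a, _, rfl, ?_, ⟨c a, ?_, ?_⟩, ⟨c b, ?_, ?_⟩⟩
  · rw [← Finset.sum_subset (s₁ := Finset.Ico a (b + 1))
      (fun i hi ↦ by simp at hi ⊢; omega)
      (fun i hi hi' ↦ by rw [hsupp i hi hi', zero_mul]),
      Finset.sum_Ico_eq_sum_range, Finset.mul_sum, show b + 1 - a = b - a + 1 by omega]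
    refine Finset.sum_congr rfl fun j hj ↦ ?_
    have hj' : j ≤ b - a := by simpa [Nat.lt_succ_iff] using hj
    rw [show n - (a + j) = (n - b) + (b - a - j) by omega, pow_add, pow_add]
    ring
  · exact (Finset.mem_filter.mp ha).2
  · rw [Finset.sum_range_succ']
    simp only [add_zero, pow_zero, one_mul, Nat.sub_zero, add_sub_cancel_right]
    refine Finset.dvd_sum fun j _ ↦ ?_
    rw [pow_succ]
    exact ⟨c (a + (j + 1)) * (u ^ j * v ^ (b - a - (j + 1))), by ring⟩
  · exact (Finset.mem_filter.mp hb).2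
  · rw [Finset.sum_range_succ, show a + (b - a) = b by omega]
    simp only [Nat.sub_self, pow_zero, mul_one, add_sub_cancel_right]
    refine Finset.dvd_sum fun j hj ↦ ?_
    have hj' : j < b - a := by simpa using hj
    exact ((dvd_pow_self v (by omega)).mul_left _).mul_left _

/-- A prime containing `u ^ a * v ^ e * p` and `(u * v) ^ (s + 1) + (p * (u + v)) ^ 2` contains `u`, `v`
or `p`. If it contains `p`, the second element forces `u` or `v` into it. If it contains one of `u`
and `v`, the second element forces the other or `p` into it, and `p` is congruent to a unit multiple
of a power of the other. -/
theorem mem_of_form_mem {S : Type*} [CommRing S] {P : Ideal S} (hP : P.IsPrime) {u v p : S}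
    {a e s : ℕ} (hu : ∃ α, IsUnit α ∧ u ∣ p - α * v ^ s) (hv : ∃ β, IsUnit β ∧ v ∣ p - β * u ^ s)
    (hrel : u ^ a * v ^ e * p ∈ P) (hQ : (u * v) ^ (s + 1) + (p * (u + v)) ^ 2 ∈ P) :
    u ∈ P ∧ v ∈ P := by
  have key : ∀ x y : S, (∃ α, IsUnit α ∧ x ∣ p - α * y ^ s) →
      (x * y) ^ (s + 1) + (p * (x + y)) ^ 2 ∈ P → x ∈ P → y ∈ P := by
    rintro x y ⟨α, hα, z, hz⟩ h hx
    have h1 : (x * y) ^ (s + 1) ∈ P :=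
      Ideal.pow_mem_of_mem _ (P.mul_mem_right _ hx) _ (Nat.succ_pos s)
    have h2 := hP.mem_of_pow_mem _ ((P.add_mem_iff_right h1).mp h)
    rcases hP.mem_or_mem h2 with h3 | h3
    · have h4 : α * y ^ s ∈ P := by
        have : α * y ^ s = p - x * z := by rw [← hz]; ring
        rw [this]
        exact P.sub_mem h3 (P.mul_mem_right _ hx)
      rw [Ideal.unit_mul_mem_iff_mem _ hα] at h4
      exact hP.mem_of_pow_mem _ h4
    · exact (P.add_mem_iff_right hx).mp h3
  have hor : u ∈ P ∨ v ∈ P := by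
    rcases hP.mem_or_mem hrel with h | h
    · exact (hP.mem_or_mem h).imp (hP.mem_of_pow_mem _) (hP.mem_of_pow_mem _)
    · have h1 : (p * (u + v)) ^ 2 ∈ P :=
        Ideal.pow_mem_of_mem _ (P.mul_mem_right _ h) _ two_pos
      exact hP.mem_or_mem (hP.mem_of_pow_mem _ ((P.add_mem_iff_left h1).mp hQ))
  rcases hor with h | h
  · exact ⟨h, key u v hu hQ h⟩
  · exact ⟨key v u hv (by rwa [mul_comm v u, add_comm v u]) h, h⟩

/-! ### Homogeneous elements of the Rees algebra -/

open Polynomial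

/-- The homogeneous component of degree `d` of the Rees algebra of `I`: the elements whose underlying
polynomial is a monomial of degree `d`, zero included. -/
noncomputable def grade {R : Type*} [CommRing R] (I : Ideal R) (d : ℕ) : Submodule R (reesAlgebra I) :=
  (LinearMap.range (monomial d : R →ₗ[R] R[X])).comap (reesAlgebra I).val.toLinearMap

section
variable {R : Type*} [CommRing R] {I : Ideal R}

theorem mem_grade {d : ℕ} {z : reesAlgebra I} :
    z ∈ grade I d ↔ ∃ y ∈ I ^ d, (z : R[X]) = monomial d y := by
  constructor
  · rintro ⟨y, hy⟩
    have hy' : monomial d y = (z : R[X]) := hy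
    refine ⟨y, ?_, hy'.symm⟩
    have := z.2 d
    rw [← hy'] at this
    simpa using this
  · rintro ⟨y, -, hy⟩
    exact ⟨y, hy.symm⟩

theorem mul_mem_grade {d e : ℕ} {z w : reesAlgebra I} (hz : z ∈ grade I d) (hw : w ∈ grade I e) :
    z * w ∈ grade I (d + e) := by
  obtain ⟨y, -, hy⟩ := mem_grade.mp hz
  obtain ⟨x, -, hx⟩ := mem_grade.mp hw
  exact ⟨y * x, by
    change _ = ((z * w : reesAlgebra I) : R[X])
    rw [MulMemClass.coe_mul, hy, hx, monomial_mul_monomial]⟩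

theorem pow_mem_grade {d : ℕ} {z : reesAlgebra I} (hz : z ∈ grade I d) (k : ℕ) :
    z ^ k ∈ grade I (d * k) := by
  induction k with
  | zero => exact ⟨1, rfl⟩
  | succ k ih => rw [pow_succ, mul_add_one]; exact mul_mem_grade ih hz

theorem exists_monomial {d : ℕ} {y : R} (hy : y ∈ I ^ d) :
    ∃ z : reesAlgebra I, (z : R[X]) = monomial d y :=
  ⟨⟨monomial d y, reesAlgebra.monomial_mem.mpr hy⟩, rfl⟩

theorem mem_map_of_monomial {m : Ideal R} {e : ℕ} {z : reesAlgebra I} {y : R}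
    (hy : y ∈ m * I ^ e) (hz : (z : R[X]) = monomial e y) :
    z ∈ m.map (algebraMap R (reesAlgebra I)) := by
  have : ∃ z' ∈ m.map (algebraMap R (reesAlgebra I)), (z' : R[X]) = monomial e y := by
    clear hz
    induction hy using Submodule.mul_induction_on' with
    | mem_mul_mem r hr x hx =>
      obtain ⟨w, hw⟩ := exists_monomial hx
      refine ⟨algebraMap R _ r * w, Ideal.mul_mem_right _ _ (Ideal.mem_map_of_mem _ hr), ?_⟩
      rw [MulMemClass.coe_mul, hw]
      exact C_mul_monomial
    | add x _ y _ hx hy =>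
      obtain ⟨w, hw, hw'⟩ := hx
      obtain ⟨w₂, hw₂, hw₂'⟩ := hy
      exact ⟨w + w₂, Ideal.add_mem _ hw hw₂, by
        rw [AddMemClass.coe_add, hw', hw₂', map_add]⟩
  obtain ⟨z', hz', h⟩ := this
  rwa [show z = z' from Subtype.ext (hz.trans h.symm)]

theorem coeff_mem_of_mem_map {m : Ideal R} {z : reesAlgebra I}
    (hz : z ∈ m.map (algebraMap R (reesAlgebra I))) : ∀ e, (z : R[X]).coeff e ∈ m * I ^ e := by
  refine Submodule.span_induction (p := fun (z : reesAlgebra I) _ ↦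
    ∀ e, (z : R[X]).coeff e ∈ m * I ^ e)
    ?_ ?_ ?_ ?_ hz
  · rintro _ ⟨r, hr, rfl⟩ e
    change (C r).coeff e ∈ _
    rw [coeff_C]
    split_ifs with h
    · subst h
      simpa using hr
    · exact Ideal.zero_mem _
  · intro e
    simp
  · intro x y _ _ hx hy e
    rw [AddMemClass.coe_add, coeff_add]
    exact Ideal.add_mem _ (hx e) (hy e)
  · intro s x _ hx e
    rw [smul_eq_mul, MulMemClass.coe_mul, coeff_mul]
    refine Ideal.sum_mem _ fun ij hij ↦ ?_
    rw [← Finset.HasAntidiagonal.mem_antidiagonal.mp hij, pow_add, mul_left_comm]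
    exact Ideal.mul_mem_mul (s.2 _) (hx _)

/-! ### Principal reductions -/

variable [IsLocalRing R]

/-- Two homogeneous elements of the same positive degree can be replaced, as far as primes over `M S`
are concerned, by a single homogeneous element. -/
theorem exists_grade_pair {n : ℕ} (hn : 0 < n)
    (hI : ∀ m, 0 < m → ∃ s : Finset R, s.card ≤ n ∧ Ideal.span (s : Set R) = I ^ m)
    {d : ℕ} (hd : 0 < d) {u v : reesAlgebra I} (hu : u ∈ grade I d) (hv : v ∈ grade I d) :
    ∃ m, 0 < m ∧ ∃ Q ∈ grade I m, ∀ P : Ideal (reesAlgebra I), P.IsPrime →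
      (maximalIdeal R).map (algebraMap R (reesAlgebra I)) ≤ P → Q ∈ P → u ∈ P ∧ v ∈ P := by
  obtain ⟨gens, hcard, hgens⟩ := hI (d * n) (Nat.mul_pos hd hn)
  have hform : ∀ s i, i ≤ s → u ^ i * v ^ (s - i) ∈ grade I (d * s) := by
    intro s i hi
    have := mul_mem_grade (pow_mem_grade hu i) (pow_mem_grade hv (s - i))
    rwa [← mul_add, Nat.add_sub_cancel' hi] at this
  -- For `i > n` the subtraction `n - i` truncates, and `w i` plays no role.
  set w : ℕ → R := fun i ↦ ((u ^ i * v ^ (n - i) : reesAlgebra I) : R[X]).coeff (d * n)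
  have hw : ∀ i ≤ n, ((u ^ i * v ^ (n - i) : reesAlgebra I) : R[X]) = monomial (d * n) (w i) := by
    intro i hi
    obtain ⟨y, -, hy⟩ := mem_grade.mp (hform n i hi)
    simp only [w, hy, coeff_monomial_same]
  obtain ⟨c, hc, hcu, hrel⟩ := exists_relation gens hcard w
    (fun i _ ↦ by rw [hgens]; exact (u ^ i * v ^ (n - i)).2 _)
  rw [hgens] at hrel
  set γ : ℕ → reesAlgebra I := fun i ↦ algebraMap R _ (c i)
  obtain ⟨a, e, s, p, hp, hfac, hα, hβ⟩ := exists_factor u v (n := n) γ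
    (fun i ↦ (hc i).imp (fun h ↦ by simp [γ, h]) (fun h ↦ h.map _))
    (hcu.imp fun i h ↦ ⟨h.1, h.2.map _⟩)
  have hmem : u ^ a * v ^ e * p ∈ (maximalIdeal R).map (algebraMap R (reesAlgebra I)) := by
    refine mem_map_of_monomial hrel ?_
    rw [← hfac, map_sum, AddSubmonoidClass.coe_finsetSum]
    refine Finset.sum_congr rfl fun i hi ↦ ?_
    rw [MulMemClass.coe_mul, hw i (by simpa [Nat.lt_succ_iff] using hi)]
    exact C_mul_monomial
  have hpg : p ∈ grade I (d * s) := by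
    rw [hp]
    refine Submodule.sum_mem _ fun j hj ↦ ?_
    rw [← Algebra.smul_def]
    exact Submodule.smul_mem _ _ (hform s j (by simpa [Nat.lt_succ_iff] using hj))
  refine ⟨(d + d) * (s + 1), by positivity, (u * v) ^ (s + 1) + (p * (u + v)) ^ 2,
    Submodule.add_mem _ (pow_mem_grade (mul_mem_grade hu hv) _) ?_, fun P hP hM hQ ↦
    mem_of_form_mem hP hα hβ (hM hmem) hQ⟩
  have := pow_mem_grade (mul_mem_grade hpg (Submodule.add_mem _ hu hv)) 2
  rwa [show (d * s + d) * 2 = (d + d) * (s + 1) by ring] at this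

/-- The degree-one elements of the Rees algebra attached to a finite subset of `I` can be replaced, as far
as primes over `M S` are concerned, by a single homogeneous element. -/
theorem exists_grade_finset {n : ℕ} (hn : 0 < n)
    (hI : ∀ m, 0 < m → ∃ s : Finset R, s.card ≤ n ∧ Ideal.span (s : Set R) = I ^ m)
    (T : Finset R) (hT : ∀ x ∈ T, x ∈ I) :
    ∃ m, 0 < m ∧ ∃ Q ∈ grade I m, ∀ P : Ideal (reesAlgebra I), P.IsPrime →
      (maximalIdeal R).map (algebraMap R (reesAlgebra I)) ≤ P → Q ∈ P →
        ∀ x ∈ T, ∀ z : reesAlgebra I, (z : R[X]) = monomial 1 x → z ∈ P := by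
  classical
  induction T using Finset.induction_on with
  | empty => exact ⟨1, one_pos, 0, Submodule.zero_mem _, by simp⟩
  | insert x T _ ih =>
    obtain ⟨m, hm, Q, hQ, hQP⟩ := ih fun y hy ↦ hT y (Finset.mem_insert_of_mem hy)
    obtain ⟨z₀, hz₀⟩ := exists_monomial (I := I) (d := 1) (y := x)
      (by simpa using hT x (Finset.mem_insert_self _ _))
    have hz₀g : z₀ ∈ grade I 1 := ⟨x, hz₀.symm⟩
    have hz₀m := pow_mem_grade hz₀g m
    rw [one_mul] at hz₀m
    obtain ⟨m', hm', Q', hQ', hQP'⟩ := exists_grade_pair hn hI hm hQ hz₀m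
    refine ⟨m', hm', Q', hQ', fun P hP hM hmem y hy z hz ↦ ?_⟩
    obtain ⟨h1, h2⟩ := hQP' P hP hM hmem
    rcases Finset.mem_insert.mp hy with rfl | hy
    · rw [show z = z₀ from Subtype.ext (hz.trans hz₀.symm)]
      exact hP.mem_of_pow_mem _ h2
    · exact hQP P hP hM h1 y hy z hz

/-- If the powers of `I` have boundedly many generators, then some power of `I` has a principal
reduction. The ideal `𝔞` of the proof is generated by `I` placed in degree one. -/
theorem exists_reduction {n : ℕ} (hn : 0 < n)
    (hI : ∀ m, 0 < m → ∃ s : Finset R, s.card ≤ n ∧ Ideal.span (s : Set R) = I ^ m) :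
    ∃ t m, 0 < m ∧ ∃ q ∈ I ^ m, I ^ (t + m) = Ideal.span {q} * I ^ t := by
  obtain ⟨T, -, hT⟩ := hI 1 one_pos
  rw [pow_one] at hT
  have hTI : ∀ x ∈ T, x ∈ I := fun x hx ↦ hT ▸ Ideal.subset_span hx
  obtain ⟨m, hm, Q, hQ, hQP⟩ := exists_grade_finset hn hI T hTI
  obtain ⟨q, hq, hqQ⟩ := mem_grade.mp hQ
  set MS := (maximalIdeal R).map (algebraMap R (reesAlgebra I))
  have hz : ∀ x : T, ∃ z : reesAlgebra I, (z : R[X]) = monomial 1 (x : R) := fun x ↦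
    exists_monomial (by simpa using hTI x x.2)
  choose z hz using hz
  set 𝔞 : Ideal (reesAlgebra I) := Ideal.span (Set.range z) with h𝔞
  have hrad : 𝔞 ≤ (Ideal.span {Q} ⊔ MS).radical := by
    rw [Ideal.radical_eq_sInf, h𝔞, Ideal.span_le]
    rintro _ ⟨x, rfl⟩
    refine Ideal.mem_sInf.mpr fun {P} hP ↦ ?_
    exact hQP P hP.2 (le_sup_right.trans hP.1)
      (hP.1 (Ideal.mem_sup_left (Ideal.mem_span_singleton_self Q))) x x.2 _ (hz x)
  obtain ⟨t, ht⟩ := Ideal.exists_pow_le_of_le_radical_of_fg hrad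
    (Submodule.fg_span (Set.finite_range z))
  have h𝔞1 : ∀ y ∈ I, ∃ f ∈ 𝔞, (f : R[X]) = monomial 1 y := by
    intro y hy
    rw [← hT] at hy
    refine Submodule.span_induction (p := fun y _ ↦ ∃ f ∈ 𝔞, (f : R[X]) = monomial 1 y)
      (fun x hx ↦ ⟨z ⟨x, hx⟩, Ideal.subset_span ⟨_, rfl⟩, hz _⟩) ⟨0, 𝔞.zero_mem, by simp⟩
      ?_ ?_ hy
    · rintro x y - - ⟨f, hf, hf'⟩ ⟨g, hg, hg'⟩
      exact ⟨f + g, 𝔞.add_mem hf hg, by rw [AddMemClass.coe_add, hf', hg', map_add]⟩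
    · rintro r x - ⟨f, hf, hf'⟩
      refine ⟨algebraMap R _ r * f, 𝔞.mul_mem_left _ hf, ?_⟩
      rw [MulMemClass.coe_mul, hf']
      exact C_mul_monomial
  have h𝔞e : ∀ e, ∀ y ∈ I ^ e, ∃ f ∈ 𝔞 ^ e, (f : R[X]) = monomial e y := by
    intro e
    induction e with
    | zero => exact fun y _ ↦ ⟨algebraMap R _ y, by simp, rfl⟩
    | succ e ih =>
      intro y hy
      rw [pow_succ] at hy
      induction hy using Submodule.mul_induction_on' with
      | mem_mul_mem x hx y hy =>
        obtain ⟨f, hf, hf'⟩ := ih x hx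
        obtain ⟨g, hg, hg'⟩ := h𝔞1 y hy
        refine ⟨f * g, ?_, ?_⟩
        · rw [pow_succ]
          exact Ideal.mul_mem_mul hf hg
        · rw [MulMemClass.coe_mul, hf', hg', monomial_mul_monomial]
      | add x _ y _ hx hy =>
        obtain ⟨f, hf, hf'⟩ := hx
        obtain ⟨g, hg, hg'⟩ := hy
        exact ⟨f + g, Ideal.add_mem _ hf hg, by rw [AddMemClass.coe_add, hf', hg', map_add]⟩
  refine ⟨t, m, hm, q, hq, le_antisymm ?_ ?_⟩
  · obtain ⟨s, -, hs⟩ := hI (t + m) (by omega)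
    refine Submodule.le_of_le_smul_of_le_jacobson_bot (I := maximalIdeal R) ⟨s, hs⟩
      (IsLocalRing.jacobson_eq_maximalIdeal _ bot_ne_top).ge fun y hy ↦ ?_
    obtain ⟨f, hf, hfy⟩ := h𝔞e _ y hy
    obtain ⟨_, hg, h, hh, hgh⟩ := Submodule.mem_sup.mp (ht (Ideal.pow_le_pow_right (by omega) hf))
    obtain ⟨g, rfl⟩ := Ideal.mem_span_singleton.mp hg
    have hy' : y = q * (g : R[X]).coeff t + (h : R[X]).coeff (t + m) := by
      have := congrArg (fun f : reesAlgebra I ↦ (f : R[X]).coeff (t + m)) hgh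
      simpa [hfy, hqQ, coeff_monomial_mul] using this.symm
    rw [hy']
    exact Submodule.add_mem_sup
      (Ideal.mul_mem_mul (Ideal.mem_span_singleton_self q) (g.2 t)) (coeff_mem_of_mem_map hh _)
  · rw [add_comm, pow_add]
    exact Ideal.mul_mono ((Ideal.span_singleton_le_iff_mem _).mpr hq) le_rfl

theorem exists_stable {n : ℕ} (hn : 0 < n)
    (hI : ∀ m, 0 < m → ∃ s : Finset R, s.card ≤ n ∧ Ideal.span (s : Set R) = I ^ m) :
    ∃ N : ℕ, 0 < N ∧ ∃ x ∈ I ^ N, I ^ (2 * N) = Ideal.span {x} * I ^ N := by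
  obtain ⟨t, m, hm, q, hq, h⟩ := exists_reduction hn hI
  have hj : ∀ j, I ^ (t + m * j) = Ideal.span {q ^ j} * I ^ t := by
    intro j
    induction j with
    | zero => simp
    | succ j ih =>
      rw [mul_add_one, ← add_assoc, add_right_comm, pow_add, h, mul_assoc, ← pow_add, ih,
        ← mul_assoc, Ideal.span_singleton_mul_span_singleton, ← pow_succ']
  have hle : t ≤ m * (t + 1) := by nlinarith
  refine ⟨m * (t + 1), by positivity, q ^ (t + 1), ?_, ?_⟩
  · rw [pow_mul]
    exact Ideal.pow_mem_pow hq _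
  · rw [show 2 * (m * (t + 1)) = (t + m * (t + 1)) + (m * (t + 1) - t) by omega, pow_add, hj,
      mul_assoc, ← pow_add, Nat.add_sub_cancel' hle]

end

/-! ### The remaining implications -/

theorem three_imp_four {R : Type*} [CommRing R] [IsLocalRing R]
    (h : ∃ n : ℕ, 0 < n ∧ ∀ I : Ideal R, I.IsPrimary → I.radical = maximalIdeal R →
      ∃ s : Finset R, s.card ≤ n ∧ Ideal.span (s : Set R) = I)
    (I : Ideal R) (hI : I.radical = maximalIdeal R) :
    ∃ n : ℕ, 0 < n ∧ ∃ x ∈ I ^ n, I ^ (2 * n) = Ideal.span {x} * I ^ n := by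
  obtain ⟨n, hn, h⟩ := h
  refine exists_stable hn fun m hm ↦ ?_
  have hrad : (I ^ m).radical = maximalIdeal R := by rw [Ideal.radical_pow _ hm.ne', hI]
  refine h _ (Ideal.isPrimary_of_isMaximal_radical ?_) hrad
  rw [hrad]
  infer_instance

theorem four_imp_one {R : Type*} [CommRing R] [IsLocalRing R]
    (h : ∀ I : Ideal R, I.IsPrimary → I.radical = maximalIdeal R →
      ∃ n : ℕ, 0 < n ∧ ∃ x ∈ I ^ n, I ^ (2 * n) = Ideal.span {x} * I ^ n) :
    ∃ a : R, maximalIdeal R = (Ideal.span {a}).radical := by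
  have hp : (maximalIdeal R).IsPrime := inferInstance
  obtain ⟨n, hn, x, hx, h⟩ := h (maximalIdeal R) hp.isPrimary hp.radical
  refine ⟨x, le_antisymm ?_ ?_⟩
  · intro y hy
    refine Ideal.mem_radical_of_pow_mem (m := 2 * n) (Ideal.le_radical ?_)
    have hxy := Ideal.pow_mem_pow hy (2 * n)
    rw [h] at hxy
    exact Ideal.mul_le_left hxy
  · exact hp.radical_le_iff.mpr
      ((Ideal.span_singleton_le_iff_mem _).mpr (Ideal.pow_le_self hn.ne' hx))

end PreStable

/-- **A principal ideal theorem.**  For a local ring `R` with finitely generated maximal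
ideal `M`, the following are equivalent: (1) `M` is the radical of a principal ideal;
(2) the `M`-adic completion of `R` is a Noetherian ring of Krull dimension at most one;
(3) there is `n > 0` such that every `M`-primary ideal can be generated by `n` elements;
(4) for each `M`-primary ideal `I` there are `n > 0` and `x ∈ I^n` with `I^{2n} = x·I^n`. -/
theorem pre_pre_stable {R : Type*} [CommRing R] [IsLocalRing R]
    (hfg : (IsLocalRing.maximalIdeal R).FG) :
    List.TFAE
      [∃ a : R, IsLocalRing.maximalIdeal R = (Ideal.span {a}).radical,
       IsNoetherianRing (AdicCompletion (IsLocalRing.maximalIdeal R) R) ∧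
         ringKrullDim (AdicCompletion (IsLocalRing.maximalIdeal R) R) ≤ 1,
       ∃ n : ℕ, 0 < n ∧ ∀ I : Ideal R, I.IsPrimary →
         I.radical = IsLocalRing.maximalIdeal R →
           ∃ s : Finset R, s.card ≤ n ∧ Ideal.span (s : Set R) = I,
       ∀ I : Ideal R, I.IsPrimary → I.radical = IsLocalRing.maximalIdeal R →
         ∃ n : ℕ, 0 < n ∧ ∃ x ∈ I ^ n, I ^ (2 * n) = Ideal.span {x} * I ^ n] := by
  tfae_have 1 → 2 := fun ⟨_, ha⟩ ↦ PreStable.one_imp_two hfg ha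
  tfae_have 2 → 1 := fun h ↦ PreStable.two_imp_one hfg h.1 h.2
  tfae_have 1 → 3 := fun ⟨_, ha⟩ ↦ PreStable.one_imp_three hfg ha
  tfae_have 3 → 4 := fun h I _ hI ↦ PreStable.three_imp_four h I hI
  tfae_have 4 → 1 := PreStable.four_imp_one
  tfae_finish
end
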